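/- arXiv:2501.02563 — 6 statements merged into one kernel-verified Lean document; each statement's English description precedes it below -/
import Mathlib

section
/- For n ≥ 1 let Pi_n be the circulant graph on ℤ/nℤ in which distinct i and j are adjacent if and only if the residue of i − j modulo n lies in {1, …, ⌊n/4⌋} ∪ {n − ⌊n/4⌋, …, n − 1}. Then λ₃(Pi_n)/n → 1/π as n → ∞. -/
/-!
The adjacency matrix of `Pi_n` is circulant, so it is diagonalised by the discrete Fourier
transform, and with `m = ⌊n/4⌋` its eigenvalues are
`μ_j = 2 ∑_{k=1}^m cos (2πkj/n) = sin ((2m+1)πj/n) / sin (πj/n) - 1` for `j ≠ 0`, and `μ_0 = 2m`.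

Clearly `μ_0` is the largest and `μ_1 = μ_{-1}`. For `2 ≤ j ≤ n - 2` one has
`μ_j + 1 ≤ 1 / sin (2π/n)`. Since `(2m+1)π/n` differs from `π/2` by at most `π/n`,
`sin ((2m+1)π/n) ≥ cos (π/n)`, so `μ_1 + 1 ≥ cos (π/n) / sin (π/n)`, which is at least
`1 / sin (2π/n)` because `2 cos² (π/n) ≥ 1` for `n ≥ 4`. Hence the third largest
eigenvalue is exactly `μ_1` for `n ≥ 4`, and `μ_1 / n → 1/π` because `n sin (π/n) → π` while
`sin ((2m+1)π/n) → 1`.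
-/

open Matrix

/-- The list of eigenvalues of a real symmetric matrix, sorted in decreasing order. -/
noncomputable def eigsDesc {V : Type} [Fintype V] [DecidableEq V] (A : Matrix V V ℝ) : List ℝ :=
  if h : A.IsHermitian then
    ((Finset.univ : Finset V).val.map h.eigenvalues).sort (· ≥ ·)
  else []

/-- The `k`-th largest eigenvalue (1-indexed, counted with multiplicity) of a real
symmetric matrix. -/
noncomputable def lambdaK {V : Type} [Fintype V] [DecidableEq V] (A : Matrix V V ℝ) (k : ℕ) : ℝ :=
  (eigsDesc A).getD (k - 1) 0

/-- `graphLambda G k` is the `k`-th largest adjacency eigenvalue of the graph `G`. -/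
noncomputable def graphLambda {V : Type} [Fintype V] [DecidableEq V] (G : SimpleGraph V)
    (k : ℕ) : ℝ :=
  letI := Classical.decRel G.Adj
  lambdaK (G.adjMatrix ℝ) k

/-- The `Pivalous' graph `Pi_n` on `ℤ/nℤ`: distinct `i`, `j` are adjacent iff the residue of
`i - j` modulo `n` lies in `{1, …, ⌊n/4⌋} ∪ {n - ⌊n/4⌋, …, n - 1}` (which, after the
symmetrisation performed by `fromRel`, is the relation below). -/
def pivalous (n : ℕ) : SimpleGraph (ZMod n) :=
  SimpleGraph.fromRel (fun i j => (i - j).val ∈ Finset.Icc 1 (n / 4))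

open Finset Filter Topology

/-! ### Spectrum of a circulant matrix and of `Pi_n` -/

/-- A real symmetric circulant matrix `(c (i - j))` on `ZMod n` has as its eigenvalues the real
parts of the Fourier coefficients of `c`. -/
lemma eigenvalues_circulant {n : ℕ} [NeZero n] (c : ZMod n → ℝ) (A : Matrix (ZMod n) (ZMod n) ℝ)
    (hc : ∀ i j, A i j = c (i - j)) (hA : A.IsHermitian) :
    (univ : Finset (ZMod n)).val.map hA.eigenvalues =
      (univ : Finset (ZMod n)).val.map
        (fun j => ∑ d, c d * (ZMod.stdAddChar (-(d * j)) : ℂ).re) := by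
  set D : ZMod n → ℂ := fun j => ∑ d, (c d : ℂ) * ZMod.stdAddChar (-(d * j)) with hD
  let F : Matrix (ZMod n) (ZMod n) ℂ := fun i j => ZMod.stdAddChar (i * j)
  let G : Matrix (ZMod n) (ZMod n) ℂ := fun i j => (n : ℂ)⁻¹ * ZMod.stdAddChar (-(i * j))
  have hn : (n : ℂ) ≠ 0 := by exact_mod_cast NeZero.ne n
  have hFG : F * G = 1 := by
    ext i j
    rw [Matrix.mul_apply]
    have h1 : ∀ k, F i k * G k j = (n : ℂ)⁻¹ * ZMod.stdAddChar (k * (i - j)) := by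
      intro k
      have : k * (i - j) = i * k + -(k * j) := by ring
      rw [this, AddChar.map_add_eq_mul]
      simp only [F, G]
      ring
    simp_rw [h1]
    rw [← mul_sum, AddChar.sum_mulShift _ (ZMod.isPrimitive_stdAddChar n), Matrix.one_apply]
    by_cases h : i = j
    · simp [h, hn, ZMod.card]
    · simp [h, sub_eq_zero]
  have hAF : A.map (algebraMap ℝ ℂ) * F = F * Matrix.diagonal D := by
    ext i j
    rw [Matrix.mul_apply, Matrix.mul_diagonal, hD, mul_sum,
      ← Equiv.sum_comp (Equiv.subLeft i)]
    refine sum_congr rfl fun d _ => ?_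
    have : (i - d) * j = i * j + -(d * j) := by ring
    simp only [Matrix.map_apply, hc, F, Equiv.subLeft_apply, this, AddChar.map_add_eq_mul,
      sub_sub_cancel, Complex.coe_algebraMap]
    ring
  have hchar : (A.map (algebraMap ℝ ℂ)).charpoly = ∏ j, (Polynomial.X - Polynomial.C (D j)) := by
    rw [← Matrix.charpoly_diagonal]
    have h2 : A.map (algebraMap ℝ ℂ) = F * (Matrix.diagonal D * G) := by
      rw [← mul_assoc, ← hAF, mul_assoc, hFG, mul_one]
    rw [h2, Matrix.charpoly_mul_comm, mul_assoc, mul_eq_one_comm.mp hFG, mul_one]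
  rw [Matrix.charpoly_map, hA.charpoly_eq, Polynomial.map_prod] at hchar
  simp only [Polynomial.map_sub, Polynomial.map_X, Polynomial.map_C] at hchar
  have hroots := congrArg Polynomial.roots hchar
  have hr : ∀ f : ZMod n → ℂ,
      (∏ j, (Polynomial.X - Polynomial.C (f j))).roots = univ.val.map f := by
    intro f
    rw [Polynomial.roots_prod]
    · simp
    · simp [Finset.prod_ne_zero_iff, Polynomial.X_sub_C_ne_zero]
  rw [hr, hr] at hroots
  have := congrArg (Multiset.map Complex.re) hroots
  rw [Multiset.map_map, Multiset.map_map] at this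
  have hl : (Complex.re ∘ fun x => (algebraMap ℝ ℂ) (hA.eigenvalues x : ℝ)) = hA.eigenvalues := by
    funext j
    simp
  have hd : Complex.re ∘ D = fun j => ∑ d, c d * (ZMod.stdAddChar (-(d * j)) : ℂ).re := by
    funext j
    simp [hD, Complex.re_sum]
  rw [← hd, ← this]
  exact congrArg (fun f => Multiset.map f univ.val) hl.symm

lemma re_stdAddChar_neg {n : ℕ} [NeZero n] (x : ZMod n) :
    (ZMod.stdAddChar (-x) : ℂ).re = (ZMod.stdAddChar x : ℂ).re := by
  rw [AddChar.map_neg_eq_conj, Complex.conj_re]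

lemma re_stdAddChar_natCast {n : ℕ} [NeZero n] (k : ℕ) :
    (ZMod.stdAddChar (k : ZMod n) : ℂ).re = Real.cos (2 * Real.pi * k / n) := by
  have := ZMod.stdAddChar_coe (N := n) (k : ℤ)
  rw [Int.cast_natCast] at this
  rw [this]
  have h2 : (2 * Real.pi * Complex.I * ((k : ℤ) : ℂ) / n : ℂ)
      = ((2 * Real.pi * k / n : ℝ) : ℂ) * Complex.I := by
    push_cast; ring
  rw [h2, Complex.exp_ofReal_mul_I_re]

/-- The eigenvalue of `Pi_n` belonging to the frequency `v`. -/
noncomputable def pivalousEig (n v : ℕ) : ℝ :=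
  2 * ∑ k ∈ Icc 1 (n / 4), Real.cos (2 * k * (Real.pi * v / n))

lemma sum_val_mem_Icc {n : ℕ} [NeZero n] (f : ZMod n → ℝ) {m : ℕ} (hm : m < n) :
    ∑ d, (if d.val ∈ Icc 1 m then f d else 0) = ∑ k ∈ Icc 1 m, f (k : ZMod n) := by
  rw [← sum_filter]
  refine sum_nbij' (fun d => d.val) (fun k => (k : ZMod n)) ?_ ?_ ?_ ?_ ?_
  · intro d hd
    exact (mem_filter.mp hd).2
  · intro k hk
    have : k < n := by have := mem_Icc.mp hk; omega
    simp only [mem_filter, mem_univ, true_and]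
    rwa [ZMod.val_cast_of_lt this]
  · intro d _
    simp
  · intro k hk
    have : k < n := by have := mem_Icc.mp hk; omega
    simp [ZMod.val_cast_of_lt this]
  · intro d _
    simp

lemma eigenvalues_pivalous {n : ℕ} [NeZero n] [DecidableRel (pivalous n).Adj]
    (hA : ((pivalous n).adjMatrix ℝ).IsHermitian) :
    (univ : Finset (ZMod n)).val.map hA.eigenvalues =
      (univ : Finset (ZMod n)).val.map (fun j => pivalousEig n j.val) := by
  have hn0 : 0 < n := Nat.pos_of_ne_zero (NeZero.ne n)
  set c : ZMod n → ℝ := fun d => (if d.val ∈ Icc 1 (n / 4) then 1 else 0) +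
    (if (-d).val ∈ Icc 1 (n / 4) then 1 else 0) with hcdef
  have hc : ∀ i j, (pivalous n).adjMatrix ℝ i j = c (i - j) := by
    intro i j
    rw [SimpleGraph.adjMatrix_apply]
    by_cases hij : i = j
    · subst hij
      simp [hcdef]
    · have hne : i - j ≠ 0 := sub_ne_zero.mpr hij
      have hneg : (-(i - j)).val = n - (i - j).val := by
        have : NeZero (i - j) := ⟨hne⟩
        exact ZMod.val_neg_of_ne_zero _
      have hlt := ZMod.val_lt (i - j)
      have h' : (j - i).val = n - (i - j).val := by rw [← hneg, neg_sub]
      simp only [pivalous, SimpleGraph.fromRel_adj, hcdef, hneg, h', mem_Icc, ne_eq, hij,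
        not_false_eq_true, true_and]
      by_cases h1 : 1 ≤ (i - j).val ∧ (i - j).val ≤ n / 4
      · have h2 : ¬ (1 ≤ n - (i - j).val ∧ n - (i - j).val ≤ n / 4) := by omega
        rw [if_pos (Or.inl h1), if_pos h1, if_neg h2, add_zero]
      · simp [h1]
  rw [eigenvalues_circulant c _ hc hA]
  congr 1
  funext j
  have hm : n / 4 < n := by omega
  simp only [hcdef, add_mul, sum_add_distrib, re_stdAddChar_neg]
  have hsecond : ∑ d : ZMod n, (if (-d).val ∈ Icc 1 (n / 4) then (1 : ℝ) else 0) *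
      (ZMod.stdAddChar (d * j) : ℂ).re =
      ∑ d : ZMod n, (if d.val ∈ Icc 1 (n / 4) then (1 : ℝ) else 0) *
      (ZMod.stdAddChar (d * j) : ℂ).re := by
    rw [← Equiv.sum_comp (Equiv.neg (ZMod n))]
    refine sum_congr rfl fun d _ => ?_
    simp [re_stdAddChar_neg]
  rw [hsecond]
  simp only [ite_mul, one_mul, zero_mul]
  rw [sum_val_mem_Icc (fun d => (ZMod.stdAddChar (d * j) : ℂ).re) hm, ← two_mul, pivalousEig]
  congr 1
  refine sum_congr rfl fun k _ => ?_
  have : (k : ZMod n) * j = ((k * j.val : ℕ) : ZMod n) := by simp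
  rw [this, re_stdAddChar_natCast]
  congr 1
  push_cast
  ring

/-! ### Comparison of the eigenvalues -/

/-- Closed form of the Dirichlet kernel, cleared of denominators. -/
lemma dirichlet_sum (m : ℕ) (t : ℝ) :
    (2 * ∑ k ∈ Icc 1 m, Real.cos (2 * k * t)) * Real.sin t =
      Real.sin ((2 * m + 1) * t) - Real.sin t := by
  induction m with
  | zero => simp
  | succ m ih =>
    rw [sum_Icc_succ_top (by omega), mul_add, add_mul, ih]
    push_cast
    have h1 : (2 * ((m : ℝ) + 1) + 1) * t = 2 * (m + 1) * t + t := by ring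
    have h2 : (2 * (m : ℝ) + 1) * t = 2 * (m + 1) * t - t := by ring
    rw [h1, h2, Real.sin_add, Real.sin_sub]
    ring

lemma pivalousEig_mul_sin (n v : ℕ) :
    pivalousEig n v * Real.sin (Real.pi * v / n) =
      Real.sin ((2 * (n / 4 : ℕ) + 1) * (Real.pi * v / n)) - Real.sin (Real.pi * v / n) :=
  dirichlet_sum _ _

lemma pivalousEig_le_zero (n v : ℕ) : pivalousEig n v ≤ pivalousEig n 0 := by
  unfold pivalousEig
  gcongr with k
  simpa using Real.cos_le_one _

lemma pivalousEig_sub_one {n : ℕ} (hn : 0 < n) : pivalousEig n (n - 1) = pivalousEig n 1 := by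
  unfold pivalousEig
  congr 1
  refine sum_congr rfl fun k _ => ?_
  have hn' : (n : ℝ) ≠ 0 := by positivity
  have : 2 * (k : ℝ) * (Real.pi * ((n - 1 : ℕ) : ℝ) / n) =
      k * (2 * Real.pi) - 2 * k * (Real.pi * ((1 : ℕ) : ℝ) / n) := by
    rw [Nat.cast_sub (by omega)]
    field_simp
  rw [this, Real.cos_nat_mul_two_pi_sub]

/-- `(2⌊n/4⌋ + 1)π/n` lies within `π/n` of `π/2`. -/
lemma cos_le_sin_numerator {n : ℕ} (hn : 4 ≤ n) :
    Real.cos (Real.pi / n) ≤ Real.sin ((2 * (n / 4 : ℕ) + 1) * (Real.pi / n)) := by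
  have hn' : (0 : ℝ) < n := by exact_mod_cast (by omega : 0 < n)
  have hpi := Real.pi_pos
  rw [← Real.cos_sub_pi_div_two, ← Real.cos_abs ((2 * _ + 1) * _ - _)]
  have h1 : (4 * (n / 4 : ℕ) : ℝ) ≤ n := by exact_mod_cast (by omega : 4 * (n / 4) ≤ n)
  have h2 : (n : ℝ) ≤ 4 * (n / 4 : ℕ) + 3 := by exact_mod_cast (by omega : n ≤ 4 * (n / 4) + 3)
  apply Real.cos_le_cos_of_nonneg_of_le_pi (abs_nonneg _)
  · exact div_le_self hpi.le (by exact_mod_cast (by omega : 1 ≤ n))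
  · have he : (2 * ((n / 4 : ℕ) : ℝ) + 1) * (Real.pi / n) - Real.pi / 2 =
        (4 * (n / 4 : ℕ) + 2 - n) / 2 * (Real.pi / n) := by
      field_simp
      ring
    have hp : 0 < Real.pi / n := by positivity
    rw [he, abs_le]
    constructor <;> nlinarith

/-- `sin (πv/n) ≥ sin (2π/n)` whenever `2 ≤ v ≤ n - 2`. -/
lemma sin_two_le {n v : ℕ} (h2 : 2 ≤ v) (hv : v + 2 ≤ n) :
    Real.sin (2 * (Real.pi / n)) ≤ Real.sin (Real.pi * v / n) := by
  have hn' : (0 : ℝ) < n := by exact_mod_cast (by omega : 0 < n)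
  have hpi := Real.pi_pos
  have h2' : (2 : ℝ) ≤ v := by exact_mod_cast h2
  have hv' : (v : ℝ) + 2 ≤ n := by exact_mod_cast hv
  have hp : 0 < Real.pi / n := by positivity
  have hpn : Real.pi / n * n = Real.pi := by field_simp
  have he : Real.pi * v / n = v * (Real.pi / n) := by ring
  rw [he, ← Real.cos_pi_div_two_sub, ← Real.cos_pi_div_two_sub,
    ← Real.cos_abs (Real.pi / 2 - v * _)]
  apply Real.cos_le_cos_of_nonneg_of_le_pi (abs_nonneg _)
  · nlinarith
  · rw [abs_le]
    constructor <;> nlinarith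

/-- The chain is `μ_v + 1 ≤ 1 / sin (πv/n) ≤ cos (π/n) / sin (π/n) ≤ μ_1 + 1`. -/
lemma pivalousEig_le_one {n v : ℕ} (h2 : 2 ≤ v) (hv : v + 2 ≤ n) :
    pivalousEig n v ≤ pivalousEig n 1 := by
  have hn : 4 ≤ n := by omega
  have hn' : (4 : ℝ) ≤ n := by exact_mod_cast hn
  have hpi := Real.pi_pos
  set t := Real.pi / n with ht
  have ht0 : 0 < t := by positivity
  have ht4 : t ≤ Real.pi / 4 := by rw [ht]; gcongr
  have hs : 0 < Real.sin t := Real.sin_pos_of_pos_of_lt_pi ht0 (by linarith)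
  have hcpos : 0 < Real.cos t := Real.cos_pos_of_mem_Ioo ⟨by linarith, by linarith⟩
  have hcos2 : 0 ≤ Real.cos (2 * t) :=
    Real.cos_nonneg_of_mem_Icc ⟨by linarith, by linarith⟩
  rw [Real.cos_two_mul] at hcos2
  have hsv := sin_two_le h2 hv
  rw [← ht, Real.sin_two_mul] at hsv
  have hs2 : 0 < 2 * Real.sin t * Real.cos t := by positivity
  set S := Real.sin (Real.pi * v / n) with hS
  have hSpos : 0 < S := by linarith
  have e1 := pivalousEig_mul_sin n 1
  rw [Nat.cast_one, mul_one, ← ht] at e1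
  have c1 := cos_le_sin_numerator hn
  rw [← ht] at c1
  have ev := pivalousEig_mul_sin n v
  rw [← hS] at ev
  have hle := Real.sin_le_one ((2 * (n / 4 : ℕ) + 1) * (Real.pi * v / n))
  have hx : pivalousEig n v + 1 ≤ 1 / S := by
    rw [le_div_iff₀ hSpos]; linarith
  have hy : Real.cos t / Real.sin t ≤ pivalousEig n 1 + 1 := by
    rw [div_le_iff₀ hs]; linarith
  have hz : 1 / S ≤ Real.cos t / Real.sin t := by
    rw [div_le_div_iff₀ hSpos hs]
    nlinarith
  linarith

/-! ### The third largest eigenvalue and its limit -/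

/-- In decreasing order the spectrum begins with the frequencies `0`, `1`, `-1`. -/
lemma graphLambda_pivalous {n : ℕ} [NeZero n] (hn : 4 ≤ n) :
    graphLambda (pivalous n) 3 = pivalousEig n 1 := by
  let _ := Classical.decRel (pivalous n).Adj
  have hA : ((pivalous n).adjMatrix ℝ).IsHermitian :=
    (pivalous n).isSymm_adjMatrix (α := ℝ)
  have : Fact (1 < n) := ⟨by omega⟩
  have hv1 : (1 : ZMod n).val = 1 := ZMod.val_one n
  have hvm : (-1 : ZMod n).val = n - 1 := by
    rw [ZMod.val_neg_of_ne_zero, hv1]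
  have h10 : (1 : ZMod n) ≠ 0 := one_ne_zero
  have hm0 : (-1 : ZMod n) ≠ 0 := neg_ne_zero.mpr h10
  have hm1 : (-1 : ZMod n) ≠ 1 := by
    intro h
    have := congrArg ZMod.val h
    rw [hv1, hvm] at this
    omega
  set R : Finset (ZMod n) := ((univ.erase 0).erase 1).erase (-1) with hR
  have huniv : (univ : Finset (ZMod n)).val = 0 ::ₘ 1 ::ₘ (-1) ::ₘ R.val := by
    have a3 : insert (-1) R = (univ.erase (0 : ZMod n)).erase 1 := insert_erase (by simp [hm0, hm1])
    have a2 : insert 1 (insert (-1) R) = univ.erase (0 : ZMod n) := by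
      rw [a3]; exact insert_erase (by simp)
    have a1 : insert 0 (insert 1 (insert (-1) R)) = (univ : Finset (ZMod n)) := by
      rw [a2]; exact insert_erase (by simp)
    rw [← a1, insert_val_of_notMem (by rw [a2]; simp), insert_val_of_notMem (by rw [a3]; simp),
      insert_val_of_notMem (by simp [hR])]
  have hRle : ∀ j ∈ R, pivalousEig n j.val ≤ pivalousEig n 1 := by
    intro j hj
    simp only [hR, mem_erase, mem_univ, and_true] at hj
    obtain ⟨j1, j2, j3⟩ := hj
    have b0 : j.val ≠ 0 := by rwa [ne_eq, ZMod.val_eq_zero]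
    have b1 : j.val ≠ 1 := fun h => j2 (ZMod.val_injective n (h.trans hv1.symm))
    have b2 : j.val ≠ n - 1 := fun h => j1 (ZMod.val_injective n (h.trans hvm.symm))
    have := ZMod.val_lt j
    exact pivalousEig_le_one (by omega) (by omega)
  have hsub := pivalousEig_sub_one (n := n) (by omega)
  have hlist : eigsDesc ((pivalous n).adjMatrix ℝ) =
      pivalousEig n 0 :: pivalousEig n 1 :: pivalousEig n 1 ::
        (R.val.map fun j => pivalousEig n j.val).sort (· ≥ ·) := by
    unfold eigsDesc
    rw [dif_pos hA, eigenvalues_pivalous hA, huniv]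
    simp only [Multiset.map_cons, ZMod.val_zero, hv1, hvm, hsub]
    rw [Multiset.sort_cons, Multiset.sort_cons, Multiset.sort_cons]
    · simpa using hRle
    · simpa using hRle
    · simp [pivalousEig_le_zero]
  unfold graphLambda lambdaK
  rw [hlist]
  rfl

lemma tendsto_pivalousEig :
    Tendsto (fun n : ℕ => pivalousEig n 1 / n) atTop (𝓝 (1 / Real.pi)) := by
  have hpi := Real.pi_pos
  have ht : Tendsto (fun n : ℕ => Real.pi / (n : ℝ)) atTop (𝓝 0) :=
    tendsto_const_div_atTop_nhds_zero_nat Real.pi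
  have hcos : Tendsto (fun n : ℕ => Real.cos (Real.pi / (n : ℝ))) atTop (𝓝 1) := by
    simpa [Function.comp_def] using (Real.continuous_cos.tendsto 0).comp ht
  have hnum : Tendsto (fun n : ℕ => Real.sin ((2 * (n / 4 : ℕ) + 1) * (Real.pi / n)))
      atTop (𝓝 1) := by
    refine tendsto_of_tendsto_of_tendsto_of_le_of_le' hcos tendsto_const_nhds ?_ ?_
    · filter_upwards [eventually_ge_atTop 4] with n hn using cos_le_sin_numerator hn
    · exact Eventually.of_forall fun n => Real.sin_le_one _
  have hsinc : Tendsto (fun n : ℕ => Real.sinc (Real.pi / (n : ℝ))) atTop (𝓝 1) := by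
    simpa [Function.comp_def] using (Real.continuous_sinc.tendsto 0).comp ht
  have hmain := (hnum.div (hsinc.const_mul Real.pi) (by simp)).sub
    (tendsto_one_div_atTop_nhds_zero_nat (𝕜 := ℝ))
  rw [mul_one, sub_zero] at hmain
  refine hmain.congr' ?_
  filter_upwards [eventually_ge_atTop 4] with n hn
  have hn' : (4 : ℝ) ≤ n := by exact_mod_cast hn
  have hn0 : (n : ℝ) ≠ 0 := by positivity
  have ht0 : 0 < Real.pi / n := by positivity
  have hs : 0 < Real.sin (Real.pi / n) :=
    Real.sin_pos_of_pos_of_lt_pi ht0 (div_lt_self hpi (by linarith))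
  have e1 := pivalousEig_mul_sin n 1
  rw [Nat.cast_one, mul_one] at e1
  have e2 : pivalousEig n 1 = Real.sin ((2 * (n / 4 : ℕ) + 1) * (Real.pi / n)) /
      Real.sin (Real.pi / n) - 1 := by
    rw [eq_sub_iff_add_eq, eq_div_iff hs.ne']
    linarith
  have e3 : Real.pi * Real.sinc (Real.pi / n) = n * Real.sin (Real.pi / n) := by
    rw [Real.sinc_of_ne_zero ht0.ne']
    field_simp
  simp only [Pi.div_apply]
  rw [e2, e3]
  field_simp

theorem stmt_11 :
    Filter.Tendsto
      (fun n : ℕ =>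
        if h : 0 < n then
          haveI : NeZero n := ⟨by omega⟩
          graphLambda (pivalous n) 3 / n
        else 0)
      Filter.atTop (nhds (1 / Real.pi)) := by
  refine tendsto_pivalousEig.congr' ?_
  filter_upwards [eventually_ge_atTop 4] with n hn
  have h : 0 < n := by omega
  have : NeZero n := ⟨by omega⟩
  rw [dif_pos h, graphLambda_pivalous hn]
end

section
/- Let κ ∈ ℝ and let f : ℕ → ℝ satisfy f(n)/n → 0 as n → ∞. Suppose that λ₃(G) ≤ κ·|V(G)| + f(|V(G)|) for every finite simple graph G with at least 3 vertices. Then λ₃(G) ≤ κ·|V(G)| − 1 for every finite simple graph G with at least 3 vertices. -/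
/-!
The idea is amplification with closed blow-ups. For a graph `G` on `n` vertices with
adjacency matrix `A`, replace each vertex by a clique of size `t`, all edges of `G` becoming
complete bipartite graphs. The blow-up has `n t` vertices and adjacency matrix
`(A + I) ⊗ J - I`, so an eigenvector of `A` for `μ` lifts to one for `t (μ + 1) - 1`. Hence
`λ₃(blow-up) ≥ t (λ₃(G) + 1) - 1`, and the hypothesis gives
`t (λ₃(G) + 1) - 1 ≤ κ n t + f (n t)`; dividing by `t` and letting `t → ∞` yields
`λ₃(G) + 1 ≤ κ n`.

Lower bounds on `λ₃` are handled by `le_lambdaK_three_iff` (at least three eigenvalues are `≥ c`)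
and `le_lambdaK_three_of_eigenvectors` (three independent eigenvectors with eigenvalues `≥ c`).
-/

open Matrix

/-- In a decreasing list, the third entry is `≥ c` exactly when at least three entries are. -/
lemma le_getD_two_iff (L : List ℝ) (hs : L.Pairwise (· ≥ ·)) (hl : 3 ≤ L.length) (c : ℝ) :
    c ≤ L.getD 2 0 ↔ 3 ≤ L.countP (fun x => decide (c ≤ x)) := by
  match L, hl with
  | x :: y :: z :: l, _ =>
    simp only [List.pairwise_cons, List.mem_cons] at hs
    obtain ⟨h1, h2, h3, -⟩ := hs
    have hxz : x ≥ z := h1 z (by simp)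
    have hyz : y ≥ z := h2 z (by simp)
    simp only [List.getD_cons_succ, List.getD_cons_zero]
    constructor
    · intro hc
      rw [List.countP_cons_of_pos (by simpa using hc.trans hxz),
        List.countP_cons_of_pos (by simpa using hc.trans hyz),
        List.countP_cons_of_pos (by simpa using hc)]
      omega
    · intro hc
      by_contra hz
      have h0 : l.countP (fun x => decide (c ≤ x)) = 0 := by
        rw [List.countP_eq_zero]
        intro a ha hca
        exact hz ((of_decide_eq_true hca).trans (h3 a ha))
      simp only [List.countP_cons, h0, decide_eq_true_eq, if_neg hz] at hc
      split_ifs at hc <;> omega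

lemma le_lambdaK_three_iff {V : Type} [Fintype V] [DecidableEq V] {A : Matrix V V ℝ}
    (hA : A.IsHermitian) (hV : 3 ≤ Fintype.card V) (c : ℝ) :
    c ≤ lambdaK A 3 ↔ 3 ≤ (Finset.univ.filter fun i => c ≤ hA.eigenvalues i).card := by
  have hcount : (eigsDesc A).countP (fun x => decide (c ≤ x))
      = (Finset.univ.filter fun i => c ≤ hA.eigenvalues i).card := by
    rw [eigsDesc, dif_pos hA, ← Multiset.coe_countP, Multiset.sort_eq, Multiset.countP_map]
    rfl
  rw [← hcount]
  apply le_getD_two_iff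
  · rw [eigsDesc, dif_pos hA]
    exact Multiset.pairwise_sort _ _
  · rw [eigsDesc, dif_pos hA]
    simpa using hV

/-- An eigenvector for an eigenvalue `≥ c` lies in the span of the members of the orthonormal
eigenbasis with eigenvalue `≥ c`; three independent ones force this span to have dimension `≥ 3`. -/
lemma le_lambdaK_three_of_eigenvectors {V : Type} [Fintype V] [DecidableEq V] {A : Matrix V V ℝ}
    (hA : A.IsHermitian) (hV : 3 ≤ Fintype.card V) {c : ℝ} (w : Fin 3 → V → ℝ) (μ : Fin 3 → ℝ)
    (hw : LinearIndependent ℝ w) (hμ : ∀ j, A *ᵥ w j = μ j • w j) (hc : ∀ j, c ≤ μ j) :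
    c ≤ lambdaK A 3 := by
  rw [le_lambdaK_three_iff hA hV]
  set S := Finset.univ.filter fun i => c ≤ hA.eigenvalues i with hS
  let u : V → V → ℝ := fun i => (hA.eigenvectorBasis i).ofLp
  have hmem : ∀ j, w j ∈ Submodule.span ℝ ((S.image u : Finset (V → ℝ)) : Set (V → ℝ)) := by
    intro j
    -- Coefficients along eigenvectors for eigenvalues different from `μ j` vanish.
    have hcoef : ∀ i, i ∉ S → u i ⬝ᵥ w j = 0 := by
      intro i hi
      have hlt : hA.eigenvalues i < c := by simpa [hS] using hi
      have h1 : u i ⬝ᵥ (A *ᵥ w j) = hA.eigenvalues i * (u i ⬝ᵥ w j) := by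
        have hT : Aᵀ = A := by
          rw [← Matrix.conjTranspose_eq_transpose_of_trivial, hA.eq]
        rw [Matrix.dotProduct_mulVec, ← Matrix.mulVec_transpose, hT,
          hA.mulVec_eigenvectorBasis i, smul_dotProduct, smul_eq_mul]
      rw [hμ j, dotProduct_smul, smul_eq_mul] at h1
      have h2 : (μ j - hA.eigenvalues i) * (u i ⬝ᵥ w j) = 0 := by linarith
      rcases mul_eq_zero.1 h2 with h3 | h3
      · linarith [hc j]
      · exact h3
    have hsum : w j = ∑ i, (u i ⬝ᵥ w j) • u i := by
      have h := congrArg WithLp.ofLp (hA.eigenvectorBasis.sum_repr (WithLp.toLp 2 (w j)))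
      rw [WithLp.ofLp_sum] at h
      refine h.symm.trans (Finset.sum_congr rfl fun i _ => ?_)
      rw [WithLp.ofLp_smul, OrthonormalBasis.repr_apply_apply,
        EuclideanSpace.inner_eq_star_dotProduct]
      simp [u, dotProduct_comm]
    rw [hsum]
    refine Submodule.sum_mem _ fun i _ => ?_
    by_cases hi : i ∈ S
    · exact Submodule.smul_mem _ _ (Submodule.subset_span (by
        simpa using ⟨i, hi, rfl⟩))
    · rw [hcoef i hi, zero_smul]
      exact Submodule.zero_mem _
  have hle := linearIndependent_le_span' w hw (S.image u : Finset (V → ℝ)) (by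
    rintro _ ⟨j, rfl⟩
    exact hmem j)
  have h3 : 3 ≤ (S.image u).card := by simpa using hle
  exact h3.trans Finset.card_image_le

/-- The closed blow-up of `G`: every vertex becomes a clique on `Fin t`, and every edge a complete
bipartite graph. -/
def closedBlowup {V : Type} (G : SimpleGraph V) (t : ℕ) : SimpleGraph (V × Fin t) where
  Adj p q := p ≠ q ∧ (p.1 = q.1 ∨ G.Adj p.1 q.1)
  symm := ⟨fun _ _ h => ⟨h.1.symm, h.2.imp Eq.symm fun h' => h'.symm⟩⟩
  loopless := ⟨fun _ h => h.1 rfl⟩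

lemma closedBlowup_mulVec {V : Type} [Fintype V] [DecidableEq V] (G : SimpleGraph V) (t : ℕ)
    [DecidableRel G.Adj] [DecidableRel (closedBlowup G t).Adj] (x : V → ℝ) (μ : ℝ)
    (hx : G.adjMatrix ℝ *ᵥ x = μ • x) :
    (closedBlowup G t).adjMatrix ℝ *ᵥ (fun p => x p.1)
      = (t * (μ + 1) - 1 : ℝ) • fun p : V × Fin t => x p.1 := by
  ext ⟨v, a⟩
  have hentry : ∀ q : V × Fin t, (closedBlowup G t).adjMatrix ℝ (v, a) q
      = (if v = q.1 then 1 else 0) + G.adjMatrix ℝ v q.1 - if (v, a) = q then 1 else 0 := by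
    rintro ⟨u, b⟩
    have hadj : (closedBlowup G t).Adj (v, a) (u, b) ↔ (v, a) ≠ (u, b) ∧ (v = u ∨ G.Adj v u) :=
      Iff.rfl
    simp only [SimpleGraph.adjMatrix_apply, hadj]
    by_cases huv : v = u
    · subst huv
      by_cases hab : a = b <;> simp [hab]
    · simp [huv]
  have hv : ∑ u, G.adjMatrix ℝ v u * x u = μ * x v := congrFun hx v
  simp only [Matrix.mulVec, dotProduct, hentry, Pi.smul_apply, smul_eq_mul, sub_mul, add_mul,
    Finset.sum_sub_distrib, Finset.sum_add_distrib]
  rw [Fintype.sum_prod_type, Fintype.sum_prod_type (f := fun p : V × Fin t =>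
    G.adjMatrix ℝ v p.1 * x p.1)]
  simp only [Finset.sum_const, Finset.card_univ, Fintype.card_fin, nsmul_eq_mul,
    ← Finset.mul_sum, hv]
  simp
  ring

lemma closedBlowup_lambda {V : Type} [Fintype V] [DecidableEq V] (G : SimpleGraph V)
    (hV : 3 ≤ Fintype.card V) (t : ℕ) (ht : 0 < t) :
    t * (graphLambda G 3 + 1) - 1 ≤ graphLambda (closedBlowup G t) 3 := by
  let := Classical.decRel G.Adj
  let := Classical.decRel (closedBlowup G t).Adj
  have hA : (G.adjMatrix ℝ).IsHermitian := by
    rw [Matrix.IsHermitian, Matrix.conjTranspose_eq_transpose_of_trivial,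
      SimpleGraph.transpose_adjMatrix]
  have hB : ((closedBlowup G t).adjMatrix ℝ).IsHermitian := by
    rw [Matrix.IsHermitian, Matrix.conjTranspose_eq_transpose_of_trivial,
      SimpleGraph.transpose_adjMatrix]
  have hcard : 3 ≤ (Finset.univ.filter fun i => graphLambda G 3 ≤ hA.eigenvalues i).card :=
    (le_lambdaK_three_iff hA hV _).1 le_rfl
  obtain ⟨e⟩ : Nonempty (Fin 3 ↪ {i // graphLambda G 3 ≤ hA.eigenvalues i}) :=
    Function.Embedding.nonempty_of_card_le (by simpa [Fintype.card_subtype] using hcard)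
  let lift : (V → ℝ) →ₗ[ℝ] (V × Fin t → ℝ) := LinearMap.funLeft ℝ ℝ Prod.fst
  have hlift : Function.Injective lift :=
    LinearMap.funLeft_injective_of_surjective ℝ ℝ _ fun v => ⟨(v, ⟨0, ht⟩), rfl⟩
  have hindep : LinearIndependent ℝ fun i => (hA.eigenvectorBasis i).ofLp :=
    hA.eigenvectorBasis.orthonormal.linearIndependent.map'
      (WithLp.linearEquiv 2 ℝ (V → ℝ)).toLinearMap (LinearEquiv.ker _)
  refine le_lambdaK_three_of_eigenvectors hB ?_
    (fun j => lift (hA.eigenvectorBasis (e j).1).ofLp)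
    (fun j => t * (hA.eigenvalues (e j).1 + 1) - 1) ?_ ?_ ?_
  · rw [Fintype.card_prod, Fintype.card_fin]
    nlinarith
  · exact (hindep.comp (fun j => (e j).1) (Subtype.val_injective.comp e.injective)).map' lift
      (LinearMap.ker_eq_bot.2 hlift)
  · intro j
    exact closedBlowup_mulVec G t _ _ (hA.mulVec_eigenvectorBasis (e j).1)
  · intro j
    have := (e j).2
    gcongr

theorem stmt_12 (κ : ℝ) (f : ℕ → ℝ)
    (hf : Filter.Tendsto (fun n : ℕ => f n / n) Filter.atTop (nhds 0))
    (h : ∀ (V : Type) [Fintype V] [DecidableEq V] (G : SimpleGraph V),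
      3 ≤ Fintype.card V →
      graphLambda G 3 ≤ κ * Fintype.card V + f (Fintype.card V)) :
    ∀ (V : Type) [Fintype V] [DecidableEq V] (G : SimpleGraph V),
      3 ≤ Fintype.card V → graphLambda G 3 ≤ κ * Fintype.card V - 1 := by
  intro V _ _ G hV
  set n := Fintype.card V with hn
  have hn0 : 0 < n := by omega
  -- Divide the bound for the blow-up by `t`.
  have hbound : ∀ᶠ t : ℕ in Filter.atTop,
      graphLambda G 3 + 1 ≤ κ * n + n * (f (n * t) / ((n * t : ℕ) : ℝ)) + 1 / (t : ℝ) := by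
    filter_upwards [Filter.eventually_gt_atTop 0] with t ht
    have h1 := closedBlowup_lambda G hV t ht
    have h2 := h (V × Fin t) (closedBlowup G t) (by
      rw [Fintype.card_prod, Fintype.card_fin]
      nlinarith)
    rw [Fintype.card_prod, Fintype.card_fin, ← hn] at h2
    have ht' : (0 : ℝ) < t := by exact_mod_cast ht
    have hn' : (n : ℝ) ≠ 0 := by positivity
    have h3 : κ * n + n * (f (n * t) / ((n * t : ℕ) : ℝ)) + 1 / (t : ℝ)
        = (κ * (n * t) + f (n * t) + 1) / t := by
      push_cast
      field_simp
    rw [h3, le_div_iff₀ ht']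
    push_cast at h2
    linarith
  have hnt : Filter.Tendsto (fun t : ℕ => n * t) Filter.atTop Filter.atTop :=
    Filter.tendsto_id.const_mul_atTop' hn0
  have hlim : Filter.Tendsto
      (fun t : ℕ => κ * n + n * (f (n * t) / ((n * t : ℕ) : ℝ)) + 1 / (t : ℝ))
      Filter.atTop (nhds (κ * n + n * 0 + 0)) :=
    (((hf.comp hnt).const_mul (n : ℝ)).const_add (κ * n)).add tendsto_one_div_atTop_nhds_zero_nat
  have := ge_of_tendsto hlim hbound
  linarith
end

section
/- Let n ≥ 2 and let M ∈ S_n satisfy λ_{n−1}(M) ≤ λ_{n−1}(M′) for all M′ ∈ S_n, and λ_n(M) < λ_{n−1}(M). Then there exists a unit eigenvector w of M with eigenvalue λ_{n−1}(M) such that, writing P for the number of indices i with w_i > 0 and N for the number of indices i with w_i < 0: (i) w_i = 1/√(2P) for every i with w_i > 0 and w_i = −1/√(2N) for every i with w_i < 0; (ii) λ_{n−1}(M) = −√(PN); (iii) M_{ij} = 0 whenever i ≠ j and w_i w_j > 0; (iv) M_{ij} = 1 whenever w_i w_j < 0; (v) for every index i with w_i = 0, (1/√P)·Σ_{j : w_j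 > 0} M_{ji} = (1/√N)·Σ_{j : w_j < 0} M_{ji}. -/
/-!
Let `μ = λ_{n-1}(M)`, and let `v`, `w` be orthonormal eigenvectors for `λ_n(M)` and `μ`. By
Courant–Fischer (`lambdaK_le`), `λ_{n-1}` of a perturbation `M + t(M' - M)` is bounded by the top
eigenvalue of its compression to `span {v, w}`. As `λ_n(M) < μ`, that top eigenvalue is
`μ + t wᵀ(M' - M)w + O(t²)`, so minimality of `M` gives `wᵀ(M' - M)w ≥ 0` for all admissible `M'`
(`first_order`). Hence `M` minimizes the linear functional `wᵀMw` on a box, which forces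
`M i j = 0` where `w i * w j > 0` and `M i j = 1` where `w i * w j < 0` (`entries_of_sign`).

The eigenvalue equation `M w = μ w` now says that all positive entries of `w` equal some `α`, all
negative ones equal some `-β`, and `-μ α = N β`, `-μ β = P α`. Since `μ < 0` (`min_neg`), these
relations and `‖w‖ = 1` give `P α² = N β² = 1/2` and `μ² = P N`; the rows with `w i = 0` give the
balance condition.
-/

open Matrix

/-- `M ∈ 𝒮ₙ`: `M` is a real symmetric matrix with all entries in `[0, 1]`. -/
def memS {n : ℕ} (M : Matrix (Fin n) (Fin n) ℝ) : Prop :=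
  M.IsSymm ∧ ∀ i j, M i j ∈ Set.Icc (0 : ℝ) 1

/-! ### Eigenbases and the Courant–Fischer bound -/

/-- The sorted list `eigsDesc A` is Mathlib's antitone enumeration `eigenvalues₀`. -/
lemma eigsDesc_eq {n : ℕ} {A : Matrix (Fin n) (Fin n) ℝ} (hA : A.IsHermitian) :
    eigsDesc A = List.ofFn hA.eigenvalues₀ := by
  have h2 : (Finset.univ : Finset (Fin n)).val.map hA.eigenvalues
      = (Finset.univ : Finset (Fin (Fintype.card (Fin n)))).val.map hA.eigenvalues₀ := by
    have : hA.eigenvalues = hA.eigenvalues₀ ∘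
      (Fintype.equivOfCardEq (Fintype.card_fin _) : Fin (Fintype.card (Fin n)) ≃ Fin n).symm := rfl
    rw [this, ← Multiset.map_map]
    simp
  rw [eigsDesc, dif_pos hA, h2, Fin.univ_val_map, Multiset.coe_sort,
    List.mergeSort_of_pairwise]
  simpa using (hA.eigenvalues₀_antitone).sortedGE_ofFn.pairwise

lemma dot_mulVec_comm {n : ℕ} {A : Matrix (Fin n) (Fin n) ℝ} (hA : A.IsSymm) (x y : Fin n → ℝ) :
    x ⬝ᵥ A *ᵥ y = y ⬝ᵥ A *ᵥ x := by
  rw [dotProduct_mulVec, ← mulVec_transpose, hA.eq, dotProduct_comm]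

/-- The spectral theorem in coordinates: an orthonormal eigenbasis `e` with eigenvalues `ν`, the
resulting formulas for the norm and the quadratic form of `A`, and distinct indices `k₀`, `k₁`
carrying the smallest and the second smallest eigenvalue. -/
lemma exists_eigensystem {n : ℕ} (hn : 2 ≤ n) {A : Matrix (Fin n) (Fin n) ℝ} (hA : A.IsSymm) :
    ∃ (e : Fin n → Fin n → ℝ) (ν : Fin n → ℝ) (k₀ k₁ : Fin n), k₀ ≠ k₁ ∧
      (∀ i, A *ᵥ e i = ν i • e i) ∧ (∀ i j, e i ⬝ᵥ e j = if i = j then 1 else 0) ∧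
      (∀ x : Fin n → ℝ, x ⬝ᵥ x = ∑ i, (e i ⬝ᵥ x) ^ 2) ∧
      (∀ x : Fin n → ℝ, x ⬝ᵥ A *ᵥ x = ∑ i, ν i * (e i ⬝ᵥ x) ^ 2) ∧
      ν k₀ = lambdaK A n ∧ ν k₁ = lambdaK A (n - 1) ∧ ∀ i, i ≠ k₀ → ν k₁ ≤ ν i := by
  have hH : A.IsHermitian := by
    rw [Matrix.IsHermitian, conjTranspose_eq_transpose_of_trivial]; exact hA
  let σ : Fin (Fintype.card (Fin n)) ≃ Fin n := Fintype.equivOfCardEq (Fintype.card_fin _)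
  have hν : ∀ i, hH.eigenvalues (σ i) = hH.eigenvalues₀ i := fun i => by
    change hH.eigenvalues₀ (σ.symm (σ i)) = _
    simp
  have hpars : ∀ x y : Fin n → ℝ, ∑ i, (hH.eigenvectorBasis i).ofLp ⬝ᵥ x
      * (hH.eigenvectorBasis i).ofLp ⬝ᵥ y = x ⬝ᵥ y := by
    intro x y
    have := hH.eigenvectorBasis.sum_inner_mul_inner (WithLp.toLp 2 x) (WithLp.toLp 2 y)
    simpa [PiLp.inner_apply, dotProduct, mul_comm] using this
  refine ⟨fun i => (hH.eigenvectorBasis i).ofLp, hH.eigenvalues, σ ⟨n - 1, by simp; omega⟩,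
    σ ⟨n - 2, by simp; omega⟩, ?_, ?_, ?_, ?_, ?_, ?_, ?_, ?_⟩
  · intro h
    have := congrArg Fin.val (σ.injective h)
    simp at this
    omega
  · exact hH.mulVec_eigenvectorBasis
  · intro i j
    have := orthonormal_iff_ite.1 hH.eigenvectorBasis.orthonormal i j
    rw [← this, dotProduct_comm]
    simp [PiLp.inner_apply, dotProduct]
  · intro x
    rw [← hpars x x]
    exact Finset.sum_congr rfl fun i _ => (sq _).symm
  · intro x
    rw [← hpars x (A *ᵥ x)]
    refine Finset.sum_congr rfl fun i _ => ?_
    rw [dot_mulVec_comm hA, hH.mulVec_eigenvectorBasis, dotProduct_smul, smul_eq_mul,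
      dotProduct_comm x]
    ring
  · rw [hν, lambdaK, eigsDesc_eq hH]
    simp [List.getD_eq_getElem?_getD, show 0 < n by omega]
  · rw [hν, lambdaK, eigsDesc_eq hH]
    simp [List.getD_eq_getElem?_getD, show n - 1 - 1 < n by omega, show n - 2 = n - 1 - 1 by omega]
  · intro i hi
    obtain ⟨j, rfl⟩ := σ.surjective i
    rw [hν, hν]
    apply hH.eigenvalues₀_antitone
    have hj := j.2
    have : j.1 ≠ n - 1 := fun h => hi (congrArg σ (Fin.ext h))
    simp at hj
    rw [Fin.le_def]
    simp
    omega

/-- The upper half of the Courant–Fischer principle for the second smallest eigenvalue: if the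
quadratic form of `A` is at most `c‖x‖²` on a plane, then `λ_{n-1}(A) ≤ c`. The plane contains a
nonzero vector orthogonal to the bottom eigenvector, on which the form is at least
`λ_{n-1}(A)‖x‖²`. -/
lemma lambdaK_le {n : ℕ} (hn : 2 ≤ n) {A : Matrix (Fin n) (Fin n) ℝ} (hA : A.IsSymm)
    (u v : Fin n → ℝ) (c : ℝ) (hind : ∀ a b : ℝ, a • u + b • v = 0 → a = 0 ∧ b = 0)
    (h : ∀ a b : ℝ, (a • u + b • v) ⬝ᵥ A *ᵥ (a • u + b • v)
      ≤ c * ((a • u + b • v) ⬝ᵥ (a • u + b • v))) :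
    lambdaK A (n - 1) ≤ c := by
  obtain ⟨e, ν, k₀, k₁, -, -, -, hnorm, hquad, -, hk₁, hle⟩ := exists_eigensystem hn hA
  rw [← hk₁]
  by_contra! hc
  -- a nonzero vector of the plane orthogonal to the bottom eigenvector
  obtain ⟨a, b, hab, horth⟩ : ∃ a b : ℝ, ¬ (a = 0 ∧ b = 0) ∧ e k₀ ⬝ᵥ (a • u + b • v) = 0 := by
    by_cases hu : e k₀ ⬝ᵥ u = 0
    · exact ⟨1, 0, by simp, by simp [hu]⟩
    · exact ⟨-(e k₀ ⬝ᵥ v), e k₀ ⬝ᵥ u, by simp [hu], by simp; ring⟩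
  have hx := h a b
  have hx0 : a • u + b • v ≠ 0 := fun h0 => hab (hind a b h0)
  generalize a • u + b • v = x at *
  have hpos : 0 < x ⬝ᵥ x := by
    simpa using dotProduct_star_self_pos_iff.2 hx0
  have : ν k₁ * (x ⬝ᵥ x) ≤ x ⬝ᵥ A *ᵥ x := by
    rw [hquad, hnorm, Finset.mul_sum]
    refine Finset.sum_le_sum fun i _ => ?_
    by_cases hi : i = k₀
    · subst hi; simp [horth]
    · exact mul_le_mul_of_nonneg_right (hle i hi) (sq_nonneg _)
  nlinarith

/-! ### First-order optimality -/

lemma memS_segment {n : ℕ} {M M' : Matrix (Fin n) (Fin n) ℝ} (hM : memS M) (hM' : memS M')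
    {t : ℝ} (h0 : 0 ≤ t) (h1 : t ≤ 1) : memS (M + t • (M' - M)) := by
  refine ⟨hM.1.add ((hM'.1.sub hM.1).smul t), fun i j => ?_⟩
  obtain ⟨a, b⟩ := hM.2 i j
  obtain ⟨c, d⟩ := hM'.2 i j
  simp only [Matrix.add_apply, Matrix.smul_apply, Matrix.sub_apply, smul_eq_mul, Set.mem_Icc]
  constructor <;> nlinarith

/-- First-order optimality of a minimizer `M`. If `wᵀ(M' - M)w = -ε < 0`, then on the plane spanned
by the two bottom eigenvectors `v`, `w` the form of `M + t(M' - M)` is at most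
`(λ_{n-1}(M) - tε/2)‖x‖²` for small `t > 0`: the `O(t)` terms involving `v` are absorbed by the gap
`λ_{n-1}(M) - λ_n(M)`. This contradicts minimality. -/
lemma first_order {n : ℕ} (hn : 2 ≤ n) {M M' : Matrix (Fin n) (Fin n) ℝ} (hM : memS M)
    (hM' : memS M')
    (hmin : ∀ M' : Matrix (Fin n) (Fin n) ℝ, memS M' → lambdaK M (n - 1) ≤ lambdaK M' (n - 1))
    (hsimple : lambdaK M n < lambdaK M (n - 1)) {v w : Fin n → ℝ}
    (hv : M *ᵥ v = lambdaK M n • v) (hw : M *ᵥ w = lambdaK M (n - 1) • w)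
    (hvv : v ⬝ᵥ v = 1) (hww : w ⬝ᵥ w = 1) (hvw : v ⬝ᵥ w = 0) :
    0 ≤ w ⬝ᵥ (M' - M) *ᵥ w := by
  by_contra! hneg
  set E := M' - M with hE
  have hEs : E.IsSymm := hM'.1.sub hM.1
  have hwv : w ⬝ᵥ v = 0 := by rw [dotProduct_comm, hvw]
  set μ := lambdaK M (n - 1) with hμ
  set g := μ - lambdaK M n with hg
  have hgpos : 0 < g := sub_pos.2 hsimple
  set p := v ⬝ᵥ E *ᵥ v with hp
  set q := v ⬝ᵥ E *ᵥ w with hq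
  have hq' : w ⬝ᵥ E *ᵥ v = q := dot_mulVec_comm hEs _ _
  obtain ⟨ε, hε⟩ : ∃ ε, ε = -(w ⬝ᵥ E *ᵥ w) := ⟨_, rfl⟩
  have hεpos : 0 < ε := by linarith
  -- `K` bounds the cost of the perturbation along `v`, after splitting the cross term `2qab`
  -- by AM-GM; `t` is chosen so that `tK ≤ g`
  set K := |p| + ε / 2 + 2 * q ^ 2 / ε with hK
  have hKpos : 0 < K := by positivity
  set t := g / (g + K) with ht
  have htpos : 0 < t := by positivity
  have ht1 : t ≤ 1 := by rw [ht, div_le_one (by positivity)]; linarith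
  have htK : t * K ≤ g := by
    rw [ht, div_mul_eq_mul_div, div_le_iff₀ (by positivity)]
    nlinarith
  have hmem := memS_segment hM hM' htpos.le ht1
  have hkey : lambdaK (M + t • E) (n - 1) ≤ μ - t * ε / 2 := by
    refine lambdaK_le hn hmem.1 v w _ ?_ ?_
    · intro a b hab
      have h1 : v ⬝ᵥ (a • v + b • w) = 0 := by rw [hab]; simp
      have h2 : w ⬝ᵥ (a • v + b • w) = 0 := by rw [hab]; simp
      simp only [dotProduct_add, dotProduct_smul, hvv, hww, hvw, hwv, smul_eq_mul] at h1 h2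
      constructor <;> linarith
    · intro a b
      have hnorm : (a • v + b • w) ⬝ᵥ (a • v + b • w) = a ^ 2 + b ^ 2 := by
        simp only [dotProduct_add, add_dotProduct, smul_dotProduct, dotProduct_smul, hvv, hww,
          hvw, hwv, smul_eq_mul]
        ring
      have hquad : (a • v + b • w) ⬝ᵥ (M + t • E) *ᵥ (a • v + b • w)
          = (μ - g) * a ^ 2 + μ * b ^ 2 + t * (p * a ^ 2 + 2 * q * a * b - ε * b ^ 2) := by
        simp only [add_mulVec, mulVec_add, mulVec_smul, smul_mulVec, hv, hw, dotProduct_add,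
          add_dotProduct, smul_dotProduct, dotProduct_smul, hvv, hww, hvw, hwv, smul_eq_mul,
          hq', ← hp, ← hq, show w ⬝ᵥ E *ᵥ w = -ε by linarith]
        rw [hg]; ring
      rw [hnorm, hquad]
      have hamgm : 2 * q * a * b ≤ 2 * q ^ 2 / ε * a ^ 2 + ε / 2 * b ^ 2 := by
        have : 2 * q ^ 2 / ε * a ^ 2 + ε / 2 * b ^ 2 - 2 * q * a * b
            = (2 * q * a - ε * b) ^ 2 / (2 * ε) := by field_simp; ring
        have : 0 ≤ (2 * q * a - ε * b) ^ 2 / (2 * ε) := by positivity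
        linarith
      have hpa : p * a ^ 2 ≤ |p| * a ^ 2 :=
        mul_le_mul_of_nonneg_right (le_abs_self p) (sq_nonneg a)
      have h3 : p * a ^ 2 + 2 * q * a * b - ε * b ^ 2 + ε / 2 * (a ^ 2 + b ^ 2)
          ≤ K * a ^ 2 := by rw [hK]; linarith
      have h4 := mul_le_mul_of_nonneg_left h3 htpos.le
      have h5 := mul_le_mul_of_nonneg_right htK (sq_nonneg a)
      linarith
  have := hmin _ hmem
  have : 0 < t * ε := by positivity
  linarith

/-! ### Negativity of the minimum -/

/-- The witness is the adjacency matrix `J - I` of the complete graph, with `λ_{n-1} = -1`. -/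
lemma lambdaK_neg {n : ℕ} (hn : 3 ≤ n) :
    ∃ A : Matrix (Fin n) (Fin n) ℝ, memS A ∧ lambdaK A (n - 1) < 0 := by
  let A : Matrix (Fin n) (Fin n) ℝ := (of fun _ _ => 1) - 1
  have hA : memS A := by
    constructor
    · ext i j; simp [A, one_apply, eq_comm]
    · intro i j
      by_cases h : i = j <;> simp [A, h]
  refine ⟨A, hA, ?_⟩
  let i0 : Fin n := ⟨0, by omega⟩
  let i1 : Fin n := ⟨1, by omega⟩
  let i2 : Fin n := ⟨2, by omega⟩
  have h01 : i0 ≠ i1 := by simp [i0, i1]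
  have h02 : i0 ≠ i2 := by simp [i0, i2]
  have h12 : i1 ≠ i2 := by simp [i1, i2]
  refine (lambdaK_le (by omega) hA.1 (Pi.single i0 1 - Pi.single i1 1)
    (Pi.single i0 1 - Pi.single i2 1) (-1) ?_ ?_).trans_lt (by norm_num)
  · intro a b hab
    have h1 := congrFun hab i1
    have h2 := congrFun hab i2
    simp [h12, h01.symm, h02.symm, h12.symm] at h1 h2
    exact ⟨h1, h2⟩
  · intro a b
    -- the plane consists of vectors with coordinate sum zero
    have hsum : ∑ i, (a • (Pi.single i0 1 - Pi.single i1 1)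
      + b • (Pi.single i0 1 - Pi.single i2 1) : Fin n → ℝ) i = 0 := by
      simp [Finset.sum_add_distrib, ← Finset.mul_sum]
    generalize (a • (Pi.single i0 1 - Pi.single i1 1)
      + b • (Pi.single i0 1 - Pi.single i2 1) : Fin n → ℝ) = x at hsum
    have : A *ᵥ x = -x := by
      have : (of fun _ _ => 1 : Matrix (Fin n) (Fin n) ℝ) *ᵥ x = 0 := by
        ext i; simpa [mulVec, dotProduct] using hsum
      simp [A, sub_mulVec, this]
    rw [this]; simp

/-- For `n ≥ 3` this follows from comparison with `J - I`; for `n = 2` the hypotheses are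
contradictory, since a matrix with nonnegative diagonal cannot have `λ₂ < λ₁ ≤ 0`. -/
lemma min_neg {n : ℕ} (hn : 2 ≤ n) {M : Matrix (Fin n) (Fin n) ℝ} (hM : memS M)
    (hmin : ∀ M' : Matrix (Fin n) (Fin n) ℝ, memS M' → lambdaK M (n - 1) ≤ lambdaK M' (n - 1))
    (hsimple : lambdaK M n < lambdaK M (n - 1)) : lambdaK M (n - 1) < 0 := by
  rcases hn.lt_or_eq with h | rfl
  · obtain ⟨A, hA, hlt⟩ := lambdaK_neg h
    exact (hmin A hA).trans_lt hlt
  · exfalso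
    -- comparison with the zero matrix makes both eigenvalues nonpositive; the diagonal entries of
    -- `M` are nonnegative, which forces the eigenvector of the negative eigenvalue to vanish
    have hz : lambdaK (0 : Matrix (Fin 2) (Fin 2) ℝ) 1 ≤ 0 := by
      refine lambdaK_le (n := 2) le_rfl (by simp [Matrix.IsSymm]) (Pi.single 0 1)
        (Pi.single 1 1) 0 ?_ ?_
      · intro a b h
        have h0 := congrFun h 0
        have h1 := congrFun h 1
        simp at h0 h1
        exact ⟨h0, h1⟩
      · simp
    have h1 : lambdaK M (2 - 1) ≤ 0 :=
      (hmin 0 ⟨by simp [Matrix.IsSymm], by simp⟩).trans hz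
    obtain ⟨e, ν, k₀, k₁, hne, -, ho, -, hdiag, hk₀, hk₁, -⟩ := exists_eigensystem le_rfl hM.1
    have hneg : ∀ i, ν i ≤ 0 := by
      intro i
      have : i = k₀ ∨ i = k₁ := by omega
      rcases this with rfl | rfl <;> linarith
    have hentry : ∀ j, ν k₀ * (e k₀ j) ^ 2 = 0 := by
      intro j
      have h := hdiag (Pi.single j 1)
      simp only [mulVec_single_one, single_one_dotProduct, dotProduct_single_one, col_apply] at h
      have h0 := (hM.2 j j).1
      rw [h] at h0
      have hterm : ∀ i ∈ Finset.univ, ν i * (e i j) ^ 2 ≤ 0 := fun i _ =>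
        mul_nonpos_of_nonpos_of_nonneg (hneg i) (sq_nonneg _)
      exact (Finset.sum_eq_zero_iff_of_nonpos hterm).1
        (le_antisymm (Finset.sum_nonpos hterm) h0) k₀ (Finset.mem_univ _)
    have hν : ν k₀ < 0 := by rw [hk₀]; linarith
    have : e k₀ = 0 := by
      ext j
      simpa [hν.ne] using hentry j
    simpa [this] using ho k₀ k₀

/-! ### Structure of a minimizer -/

/-- If `M` minimizes the linear functional `M ↦ wᵀMw` over matrices with entries in `[0, 1]`, then
its entries are forced by the signs of `w i * w j`: compare with the matrix having the forced
entries, for which every summand of `wᵀ(M' - M)w` is nonpositive. -/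
lemma entries_of_sign {n : ℕ} {M : Matrix (Fin n) (Fin n) ℝ} (hM : memS M) {w : Fin n → ℝ}
    (h : ∀ M' : Matrix (Fin n) (Fin n) ℝ, memS M' → 0 ≤ w ⬝ᵥ (M' - M) *ᵥ w) :
    (∀ i j, 0 < w i * w j → M i j = 0) ∧ (∀ i j, w i * w j < 0 → M i j = 1) := by
  let M' : Matrix (Fin n) (Fin n) ℝ := of fun i j =>
    if 0 < w i * w j then 0 else if w i * w j < 0 then 1 else M i j
  have hM'def : ∀ i j, M' i j =
    if 0 < w i * w j then 0 else if w i * w j < 0 then 1 else M i j := fun _ _ => rfl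
  have hM' : memS M' := by
    constructor
    · ext i j
      rw [transpose_apply, hM'def, hM'def, mul_comm (w j), hM.1.apply]
    · intro i j
      rw [hM'def]
      split_ifs
      · simp
      · simp
      · exact hM.2 i j
  -- `M'` minimizes each summand of the functional separately
  have hterm : ∀ i j, (M' i j - M i j) * (w i * w j) ≤ 0 := by
    intro i j
    obtain ⟨h0, h1⟩ := hM.2 i j
    rw [hM'def]
    split_ifs with hp hn
    · nlinarith
    · nlinarith
    · simp
  have hsum : w ⬝ᵥ (M' - M) *ᵥ w = ∑ i, ∑ j, (M' i j - M i j) * (w i * w j) := by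
    simp only [dotProduct, mulVec, Finset.mul_sum, Matrix.sub_apply]
    exact Finset.sum_congr rfl fun i _ => Finset.sum_congr rfl fun j _ => by ring
  have hrow : ∀ i ∈ Finset.univ, ∑ j, (M' i j - M i j) * (w i * w j) ≤ 0 :=
    fun i _ => Finset.sum_nonpos fun j _ => hterm i j
  have hzero : ∀ i j, (M' i j - M i j) * (w i * w j) = 0 := by
    intro i j
    have h1 := (Finset.sum_eq_zero_iff_of_nonpos hrow).1
      (le_antisymm (Finset.sum_nonpos hrow) (hsum ▸ h M' hM')) i (Finset.mem_univ _)
    exact (Finset.sum_eq_zero_iff_of_nonpos fun j _ => hterm i j).1 h1 j (Finset.mem_univ _)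
  constructor
  · intro i j hij
    have := (mul_eq_zero.1 (hzero i j)).resolve_right hij.ne'
    rw [hM'def, if_pos hij] at this
    linarith
  · intro i j hij
    have := (mul_eq_zero.1 (hzero i j)).resolve_right hij.ne
    rw [hM'def, if_neg hij.not_gt, if_pos hij] at this
    linarith

lemma sum_mul_of_two_values {n : ℕ} {w : Fin n → ℝ} {α β : ℝ} (hα : ∀ i, 0 < w i → w i = α)
    (hβ : ∀ i, w i < 0 → w i = -β) (f : Fin n → ℝ) :
    ∑ j, f j * w j = α * (∑ j ∈ Finset.univ.filter (fun j => 0 < w j), f j)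
      - β * ∑ j ∈ Finset.univ.filter (fun j => w j < 0), f j := by
  rw [Finset.mul_sum, Finset.mul_sum, Finset.sum_filter, Finset.sum_filter,
    ← Finset.sum_sub_distrib]
  refine Finset.sum_congr rfl fun j _ => ?_
  rcases lt_trichotomy (w j) 0 with h | h | h
  · rw [if_neg h.not_gt, if_pos h, hβ j h]; ring
  · simp [h]
  · rw [if_pos h, if_neg h.not_gt, hα j h]; ring

theorem stmt_13 (n : ℕ) (hn : 2 ≤ n) (M : Matrix (Fin n) (Fin n) ℝ) (hM : memS M)
    (hmin : ∀ M' : Matrix (Fin n) (Fin n) ℝ, memS M' → lambdaK M (n - 1) ≤ lambdaK M' (n - 1))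
    (hsimple : lambdaK M n < lambdaK M (n - 1)) :
    ∃ w : Fin n → ℝ,
      (∑ i, w i ^ 2 = 1) ∧
      M.mulVec w = lambdaK M (n - 1) • w ∧
      (let P := (Finset.univ.filter (fun i => 0 < w i)).card
       let N := (Finset.univ.filter (fun i => w i < 0)).card
       (∀ i, 0 < w i → w i = 1 / Real.sqrt (2 * P)) ∧
       (∀ i, w i < 0 → w i = -(1 / Real.sqrt (2 * N))) ∧
       lambdaK M (n - 1) = -Real.sqrt (P * N) ∧
       (∀ i j, i ≠ j → 0 < w i * w j → M i j = 0) ∧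
       (∀ i j, w i * w j < 0 → M i j = 1) ∧
       (∀ i, w i = 0 →
         (1 / Real.sqrt P) * ∑ j ∈ Finset.univ.filter (fun j => 0 < w j), M j i =
         (1 / Real.sqrt N) * ∑ j ∈ Finset.univ.filter (fun j => w j < 0), M j i)) := by
  have hneg := min_neg hn hM hmin hsimple
  obtain ⟨e, ν, k₀, k₁, hne, he, ho, -, -, hk₀, hk₁, -⟩ := exists_eigensystem hn hM.1
  have hw : M *ᵥ e k₁ = lambdaK M (n - 1) • e k₁ := hk₁ ▸ he k₁
  have hww : e k₁ ⬝ᵥ e k₁ = 1 := by simpa using ho k₁ k₁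
  obtain ⟨hpos0, hneg1⟩ := entries_of_sign hM fun M' hM' =>
    first_order hn hM hM' hmin hsimple (hk₀ ▸ he k₀) hw (by simpa using ho k₀ k₀) hww
      (by simpa [hne] using ho k₀ k₁)
  generalize e k₁ = w at hw hww hpos0 hneg1
  obtain ⟨m, hm⟩ : ∃ m, m = -lambdaK M (n - 1) := ⟨_, rfl⟩
  have hμ : lambdaK M (n - 1) = -m := by linarith
  have hmpos : 0 < m := by linarith
  have hrow : ∀ i, ∑ j, M i j * w j = -m * w i := fun i => by
    have := congrFun hw i
    rwa [hμ] at this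
  have hsq : ∑ i, w i ^ 2 = 1 := by
    rw [← hww]; exact Finset.sum_congr rfl fun i _ => sq _
  refine ⟨w, hsq, hw, ?_⟩
  intro P N
  -- the common absolute values of the positive and of the negative entries of `w`, read off from
  -- the eigenvalue equation
  obtain ⟨α, hα⟩ : ∃ α, α = -(∑ j ∈ Finset.univ.filter (fun j => w j < 0), w j) / m := ⟨_, rfl⟩
  obtain ⟨β, hβ⟩ : ∃ β, β = (∑ j ∈ Finset.univ.filter (fun j => 0 < w j), w j) / m := ⟨_, rfl⟩
  have hwα : ∀ i, 0 < w i → w i = α := by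
    intro i hi
    have h : ∑ j, M i j * w j = ∑ j ∈ Finset.univ.filter (fun j => w j < 0), w j := by
      rw [Finset.sum_filter]
      refine Finset.sum_congr rfl fun j _ => ?_
      rcases lt_trichotomy (w j) 0 with h | h | h
      · rw [if_pos h, hneg1 i j (mul_neg_of_pos_of_neg hi h), one_mul]
      · simp [h]
      · rw [if_neg h.not_gt, hpos0 i j (mul_pos hi h), zero_mul]
    rw [hα, ← h, hrow]
    field_simp
  have hwβ : ∀ i, w i < 0 → w i = -β := by
    intro i hi
    have h : ∑ j, M i j * w j = ∑ j ∈ Finset.univ.filter (fun j => 0 < w j), w j := by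
      rw [Finset.sum_filter]
      refine Finset.sum_congr rfl fun j _ => ?_
      rcases lt_trichotomy (w j) 0 with h | h | h
      · rw [if_neg h.not_gt, hpos0 i j (mul_pos_of_neg_of_neg hi h), zero_mul]
      · simp [h]
      · rw [if_pos h, hneg1 i j (mul_neg_of_neg_of_pos hi h), one_mul]
    rw [hβ, ← h, hrow]
    field_simp
  have hsumP : ∑ j ∈ Finset.univ.filter (fun j => 0 < w j), w j = P * α := by
    rw [Finset.sum_congr rfl fun j hj => hwα j (Finset.mem_filter.1 hj).2]
    simp [P]
  have hsumN : ∑ j ∈ Finset.univ.filter (fun j => w j < 0), w j = N * -β := by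
    rw [Finset.sum_congr rfl fun j hj => hwβ j (Finset.mem_filter.1 hj).2]
    simp [N]
  have hα0 : 0 ≤ α := by
    rw [hα]
    refine div_nonneg (neg_nonneg.2 (Finset.sum_nonpos fun j hj => ?_)) hmpos.le
    exact (Finset.mem_filter.1 hj).2.le
  have hβ0 : 0 ≤ β := by
    rw [hβ]
    exact div_nonneg (Finset.sum_nonneg fun j hj => (Finset.mem_filter.1 hj).2.le) hmpos.le
  have hmα : m * α = N * β := by rw [hα, hsumN]; field_simp
  have hmβ : m * β = P * α := by rw [hβ, hsumP]; field_simp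
  have hunit : P * α ^ 2 + N * β ^ 2 = 1 := by
    have h := sum_mul_of_two_values hwα hwβ w
    rw [hsumP, hsumN] at h
    have h' : ∑ j, w j * w j = 1 := hww
    linarith
  have hPα : P * α ^ 2 = 1 / 2 := by
    have h : m * (P * α ^ 2) = m * (N * β ^ 2) := by
      linear_combination (P * α) * hmα - (N * β) * hmβ
    have := mul_left_cancel₀ hmpos.ne' h
    linarith
  have hNβ : N * β ^ 2 = 1 / 2 := by linarith
  have hP : 0 < (P : ℝ) := lt_of_le_of_ne (Nat.cast_nonneg _) fun h => by
    rw [← h] at hPα; norm_num at hPα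
  have hN : 0 < (N : ℝ) := lt_of_le_of_ne (Nat.cast_nonneg _) fun h => by
    rw [← h] at hNβ; norm_num at hNβ
  have hαeq : α = 1 / √(2 * P) := by
    rw [← Real.sqrt_sq hα0, show α ^ 2 = (2 * (P : ℝ))⁻¹ by field_simp; linarith,
      Real.sqrt_inv, one_div]
  have hβeq : β = 1 / √(2 * N) := by
    rw [← Real.sqrt_sq hβ0, show β ^ 2 = (2 * (N : ℝ))⁻¹ by field_simp; linarith,
      Real.sqrt_inv, one_div]
  refine ⟨fun i hi => hαeq ▸ hwα i hi, fun i hi => hβeq ▸ hwβ i hi, ?_,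
    fun i j _ => hpos0 i j, hneg1, ?_⟩
  · have hαne : α ≠ 0 := by rintro rfl; norm_num at hPα
    have hm2 : (P : ℝ) * N = m ^ 2 := by
      apply mul_left_cancel₀ hαne
      linear_combination (-m) * hmα - N * hmβ
    rw [hμ, hm2, Real.sqrt_sq hmpos.le]
  · intro i hi
    have h := sum_mul_of_two_values hwα hwβ fun j => M j i
    have h0 : ∑ j, M j i * w j = 0 := by
      simp_rw [hM.1.apply i]
      rw [hrow, hi, mul_zero]
    rw [h0, hαeq, hβeq, Real.sqrt_mul (by norm_num), Real.sqrt_mul (by norm_num),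
      ← one_div_mul_one_div, ← one_div_mul_one_div] at h
    apply mul_left_cancel₀ (show 1 / √(2 : ℝ) ≠ 0 by positivity)
    linear_combination -h
end

section
/- Let n ≥ 2 and let M ∈ S_n satisfy λ_{n−1}(M) ≤ λ_{n−1}(M′) for all M′ ∈ S_n and λ_n(M) = λ_{n−1}(M). Let v, w ∈ ℝⁿ be orthonormal eigenvectors of M with eigenvalue λ_{n−1}(M). Let E be a real symmetric n×n matrix such that M + E ∈ S_n and xᵀEx ≤ 0 for every x in the span of v and w. Then λ_{n−1}(M + E) = λ_{n−1}(M). If moreover n ≥ 5 and every M″ ∈ S_n with λ_{n−1}(M″) ≤ λ_{n−1}(M′) for all M′ ∈ S_n satisfies λ_n(M″) = λ_{n−1}(M″), then Ev = 0 and Ew = 0. -/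
/-!
The Courant–Fischer principle carries the argument. On the plane spanned by `v` and `w` the
quadratic form of `M + E` is at most `λ_{n-1}(M) ‖x‖²`, hence
`λ_{n-1}(M + E) ≤ λ_{n-1}(M)` (`lambdaK_pred_le`), and minimality of `M` gives equality.

Consequently `M + E` is a minimizer as well, so the extra hypothesis yields
`λ_n(M + E) = λ_{n-1}(M) =: μ`. Then `M + E - μ` is positive semidefinite, while its quadratic form
is nonpositive at `v` and at `w`; a vector on which a positive semidefinite form vanishes lies in
the kernel (`mulVec_eq_smul_of_form_le`). Therefore `(M + E) v = μ v = M v`, i.e. `E v = 0`, and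
likewise for `w`.
-/


open Matrix

lemma lambdaK_eq_eigenvalues₀ {n : ℕ} {A : Matrix (Fin n) (Fin n) ℝ} (hA : A.IsHermitian)
    (k : ℕ) (hk : k - 1 < Fintype.card (Fin n)) :
    lambdaK A k = hA.eigenvalues₀ ⟨k - 1, hk⟩ := by
  have hl : eigsDesc A = List.ofFn hA.eigenvalues₀ := by
    rw [eigsDesc, dif_pos hA, ← hA.sort_roots_charpoly_eq_eigenvalues₀,
      hA.roots_charpoly_eq_eigenvalues]
    simp [Function.comp_def]
  have hk' : k - 1 < n := by simpa using hk
  rw [lambdaK, hl]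
  simp [List.getD_eq_getElem?_getD, hk']

lemma lambdaK_last_le_eigenvalues {n : ℕ} {A : Matrix (Fin n) (Fin n) ℝ} (hA : A.IsHermitian)
    (i : Fin n) : lambdaK A n ≤ hA.eigenvalues i := by
  have hi := i.2
  rw [lambdaK_eq_eigenvalues₀ hA n (by simp; omega), Matrix.IsHermitian.eigenvalues]
  apply hA.eigenvalues₀_antitone
  rw [Fin.le_def]
  have := ((Fintype.equivOfCardEq (Fintype.card_fin (Fintype.card (Fin n)))).symm i).2
  simp only [Fintype.card_fin] at this ⊢
  omega

/-- All eigenvalues but one (the index `i₀` of a smallest one) are at least `λ_{n-1}`. -/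
lemma exists_lambdaK_pred_le_eigenvalues {n : ℕ} (hn : 2 ≤ n) {A : Matrix (Fin n) (Fin n) ℝ}
    (hA : A.IsHermitian) : ∃ i₀, ∀ i, i ≠ i₀ → lambdaK A (n - 1) ≤ hA.eigenvalues i := by
  set e : Fin (Fintype.card (Fin n)) ≃ Fin n :=
    Fintype.equivOfCardEq (Fintype.card_fin (Fintype.card (Fin n))) with he
  refine ⟨e ⟨n - 1, by simp; omega⟩, fun i hi => ?_⟩
  rw [lambdaK_eq_eigenvalues₀ hA (n - 1) (by simp; omega)]
  change _ ≤ hA.eigenvalues₀ (e.symm i)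
  apply hA.eigenvalues₀_antitone
  rw [Fin.le_def]
  have h1 := (e.symm i).2
  have h2 : ((e.symm i : Fin _) : ℕ) ≠ n - 1 := by
    intro h
    apply hi
    rw [← e.symm_apply_eq]
    exact Fin.ext h
  simp only [Fintype.card_fin] at h1 ⊢
  omega

/-- The coordinates `Uᵀ x` of `x` in an orthonormal eigenbasis diagonalize the quadratic form. -/
lemma dotProduct_mulVec_eq_sum {n : ℕ} {A : Matrix (Fin n) (Fin n) ℝ} (hA : A.IsHermitian)
    (x : Fin n → ℝ) :
    x ⬝ᵥ A *ᵥ x = ∑ i, hA.eigenvalues i *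
      ((star (hA.eigenvectorUnitary : Matrix (Fin n) (Fin n) ℝ)) *ᵥ x) i ^ 2 := by
  set U : Matrix (Fin n) (Fin n) ℝ := (hA.eigenvectorUnitary).1 with hU
  have h := hA.spectral_theorem
  rw [Unitary.conjStarAlgAut_apply] at h
  have h2 : A *ᵥ x = U *ᵥ (diagonal hA.eigenvalues *ᵥ (star U *ᵥ x)) := by
    conv_lhs => rw [h]
    simp [← Matrix.mulVec_mulVec, hU]
  rw [h2, Matrix.dotProduct_mulVec, ← Matrix.mulVec_transpose]
  have h3 : star U = Uᵀ := by
    rw [Matrix.star_eq_conjTranspose, Matrix.conjTranspose_eq_transpose_of_trivial]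
  rw [h3, dotProduct]
  refine Finset.sum_congr rfl fun i _ => ?_
  rw [Matrix.mulVec_diagonal]
  ring

lemma dotProduct_self_eq_sum {n : ℕ} {A : Matrix (Fin n) (Fin n) ℝ} (hA : A.IsHermitian)
    (x : Fin n → ℝ) :
    x ⬝ᵥ x = ∑ i, ((star (hA.eigenvectorUnitary : Matrix (Fin n) (Fin n) ℝ)) *ᵥ x) i ^ 2 := by
  set U : Matrix (Fin n) (Fin n) ℝ := (hA.eigenvectorUnitary).1 with hU
  have h3 : star U = Uᵀ := by
    rw [Matrix.star_eq_conjTranspose, Matrix.conjTranspose_eq_transpose_of_trivial]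
  have h2 : U *ᵥ (star U *ᵥ x) = x := by
    rw [Matrix.mulVec_mulVec, hU, Unitary.mul_star_self_of_mem hA.eigenvectorUnitary.2, one_mulVec]
  conv_lhs => rw [← h2]
  rw [Matrix.dotProduct_mulVec, ← Matrix.mulVec_transpose, h2, h3, dotProduct]
  exact Finset.sum_congr rfl fun i _ => (sq _).symm

/-- One half of Courant–Fischer for `λ_{n-1}`: a plane on which the quadratic form is at most
`c ‖x‖²` forces `λ_{n-1} ≤ c`. -/
lemma lambdaK_pred_le {n : ℕ} (hn : 2 ≤ n) {A : Matrix (Fin n) (Fin n) ℝ} (hA : A.IsHermitian)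
    {v w : Fin n → ℝ} (hv : v ⬝ᵥ v = 1) (hw : w ⬝ᵥ w = 1) (hvw : v ⬝ᵥ w = 0) {c : ℝ}
    (h : ∀ x ∈ Submodule.span ℝ ({v, w} : Set (Fin n → ℝ)), x ⬝ᵥ A *ᵥ x ≤ c * (x ⬝ᵥ x)) :
    lambdaK A (n - 1) ≤ c := by
  obtain ⟨i₀, hi₀⟩ := exists_lambdaK_pred_le_eigenvalues hn hA
  set U : Matrix (Fin n) (Fin n) ℝ := (hA.eigenvectorUnitary).1 with hU
  -- A nonzero vector of the plane orthogonal to the eigenvector of index `i₀`.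
  obtain ⟨a, b, hab, h0⟩ : ∃ a b : ℝ, 0 < a ^ 2 + b ^ 2 ∧
      (star U *ᵥ (a • v + b • w)) i₀ = 0 := by
    by_cases hz : (star U *ᵥ v) i₀ = 0
    · exact ⟨1, 0, by norm_num, by simpa using hz⟩
    · refine ⟨(star U *ᵥ w) i₀, -(star U *ᵥ v) i₀, ?_, ?_⟩
      · rw [neg_sq]
        positivity
      simp only [mulVec_add, mulVec_smul, Pi.add_apply, Pi.smul_apply, smul_eq_mul]
      ring
  set x := a • v + b • w with hx
  have hxs : x ∈ Submodule.span ℝ ({v, w} : Set (Fin n → ℝ)) :=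
    Submodule.mem_span_pair.2 ⟨a, b, rfl⟩
  have hxx : x ⬝ᵥ x = a ^ 2 + b ^ 2 := by
    have hwv : w ⬝ᵥ v = 0 := by rw [dotProduct_comm, hvw]
    simp only [hx, add_dotProduct, dotProduct_add, smul_dotProduct, dotProduct_smul, hv, hw, hvw,
      hwv, smul_eq_mul]
    ring
  have hlow : lambdaK A (n - 1) * (x ⬝ᵥ x) ≤ x ⬝ᵥ A *ᵥ x := by
    rw [dotProduct_mulVec_eq_sum hA, dotProduct_self_eq_sum hA, Finset.mul_sum]
    refine Finset.sum_le_sum fun i _ => ?_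
    by_cases hi : i = i₀
    · subst hi
      rw [← hU, h0]
      simp
    · exact mul_le_mul_of_nonneg_right (hi₀ i hi) (sq_nonneg _)
  exact le_of_mul_le_mul_right (hlow.trans (h x hxs)) (hxx ▸ hab)

/-- A vector whose Rayleigh quotient is at most the smallest eigenvalue is an eigenvector for it. -/
lemma mulVec_eq_smul_of_form_le {n : ℕ} {A : Matrix (Fin n) (Fin n) ℝ} (hA : A.IsHermitian)
    {x : Fin n → ℝ} (h : x ⬝ᵥ A *ᵥ x ≤ lambdaK A n * (x ⬝ᵥ x)) :
    A *ᵥ x = lambdaK A n • x := by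
  set c := lambdaK A n with hc
  have key : ∀ y : Fin n → ℝ, y ⬝ᵥ (A - c • (1 : Matrix (Fin n) (Fin n) ℝ)) *ᵥ y =
      y ⬝ᵥ A *ᵥ y - c * (y ⬝ᵥ y) := fun y => by
    simp [sub_mulVec, smul_mulVec, dotProduct_sub, dotProduct_smul]
  have hlow : ∀ y : Fin n → ℝ, c * (y ⬝ᵥ y) ≤ y ⬝ᵥ A *ᵥ y := fun y => by
    rw [dotProduct_mulVec_eq_sum hA, dotProduct_self_eq_sum hA, Finset.mul_sum]
    exact Finset.sum_le_sum fun i _ =>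
      mul_le_mul_of_nonneg_right (lambdaK_last_le_eigenvalues hA i) (sq_nonneg _)
  have hpsd : (A - c • (1 : Matrix (Fin n) (Fin n) ℝ)).PosSemidef := by
    refine Matrix.PosSemidef.of_dotProduct_mulVec_nonneg
      (hA.sub (Matrix.isHermitian_one.smul (IsSelfAdjoint.all c))) fun y => ?_
    rw [star_trivial, key]
    linarith [hlow y]
  have h0 := (hpsd.dotProduct_mulVec_zero_iff x).1 (by
    rw [star_trivial, key]
    linarith [hlow x])
  simpa [sub_mulVec, smul_mulVec, sub_eq_zero] using h0

theorem stmt_14 (n : ℕ) (hn : 2 ≤ n) (M : Matrix (Fin n) (Fin n) ℝ) (hM : memS M)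
    (hmin : ∀ M' : Matrix (Fin n) (Fin n) ℝ, memS M' → lambdaK M (n - 1) ≤ lambdaK M' (n - 1))
    (hrep : lambdaK M n = lambdaK M (n - 1))
    (v w : Fin n → ℝ)
    (hv1 : ∑ i, v i ^ 2 = 1) (hw1 : ∑ i, w i ^ 2 = 1) (hvw : ∑ i, v i * w i = 0)
    (hveig : M.mulVec v = lambdaK M (n - 1) • v)
    (hweig : M.mulVec w = lambdaK M (n - 1) • w)
    (E : Matrix (Fin n) (Fin n) ℝ) (hE : E.IsSymm) (hME : memS (M + E))
    (hneg : ∀ x ∈ Submodule.span ℝ ({v, w} : Set (Fin n → ℝ)), x ⬝ᵥ E.mulVec x ≤ 0) :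
    lambdaK (M + E) (n - 1) = lambdaK M (n - 1) ∧
    (5 ≤ n →
      (∀ M'' : Matrix (Fin n) (Fin n) ℝ, memS M'' →
        (∀ M' : Matrix (Fin n) (Fin n) ℝ, memS M' → lambdaK M'' (n - 1) ≤ lambdaK M' (n - 1)) →
        lambdaK M'' n = lambdaK M'' (n - 1)) →
      E.mulVec v = 0 ∧ E.mulVec w = 0) := by
  have hA : (M + E).IsHermitian := by
    rw [Matrix.IsHermitian, Matrix.conjTranspose_eq_transpose_of_trivial]
    exact hME.1
  have hvv : v ⬝ᵥ v = 1 := by simpa [dotProduct, sq] using hv1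
  have hww : w ⬝ᵥ w = 1 := by simpa [dotProduct, sq] using hw1
  set c := lambdaK M (n - 1) with hc
  have hform : ∀ x ∈ Submodule.span ℝ ({v, w} : Set (Fin n → ℝ)),
      x ⬝ᵥ (M + E) *ᵥ x ≤ c * (x ⬝ᵥ x) := by
    intro x hx
    have hMx : M *ᵥ x = c • x := by
      obtain ⟨a, b, rfl⟩ := Submodule.mem_span_pair.1 hx
      rw [mulVec_add, mulVec_smul, mulVec_smul, hveig, hweig, smul_add, smul_comm a, smul_comm b]
    rw [add_mulVec, dotProduct_add, hMx, dotProduct_smul, smul_eq_mul]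
    linarith [hneg x hx]
  have heq : lambdaK (M + E) (n - 1) = c :=
    le_antisymm (lambdaK_pred_le hn hA hvv hww hvw hform) (hmin _ hME)
  refine ⟨heq, fun _ hall => ?_⟩
  have hlast : lambdaK (M + E) n = c := by
    rw [← heq]
    refine hall _ hME fun M' hM' => ?_
    rw [heq]
    exact hmin M' hM'
  have hker : ∀ x ∈ Submodule.span ℝ ({v, w} : Set (Fin n → ℝ)), M *ᵥ x = c • x →
      E *ᵥ x = 0 := by
    intro x hx hMx
    have h := mulVec_eq_smul_of_form_le hA (x := x) (by rw [hlast]; exact hform x hx)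
    rw [hlast, add_mulVec, hMx] at h
    simpa using h
  exact ⟨hker v (Submodule.subset_span (by simp)) hveig,
    hker w (Submodule.subset_span (by simp)) hweig⟩
end

section
/- Let n ≥ 2 and let M ∈ S_n satisfy λ_{n−1}(M) ≤ λ_{n−1}(M′) for all M′ ∈ S_n. Let M₀ be the matrix obtained from M by replacing every diagonal entry with 0. Then M₀ ∈ S_n and λ_{n−1}(M₀) = λ_{n−1}(M), so M₀ also minimises λ_{n−1} over S_n. -/
/-!
Deleting the diagonal of `M ∈ 𝒮ₙ` subtracts a diagonal matrix with nonnegative entries, so it can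
only lower the quadratic form. By Weyl monotonicity (`eigenvalues_le_of_inner_le`) every sorted
eigenvalue can only go down, in particular `λ_{n-1}`. The result `M₀` is still in `𝒮ₙ`, so
minimality of `M` gives the reverse inequality.

Weyl monotonicity is proved by a dimension count: there is a nonzero vector orthogonal to the
eigenvectors of the smaller operator of index `> k` and to those of the larger one of index `< k`,
and comparing the two quadratic forms at this vector compares the `k`-th eigenvalues.
-/

open Matrix

/-- The quadratic form of a symmetric operator in the coordinates of its eigenvector basis. -/
lemma inner_apply_eq_sum_eigenvalues {E : Type*} [NormedAddCommGroup E] [InnerProductSpace ℝ E]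
    [FiniteDimensional ℝ E] {N : ℕ} (hN : Module.finrank ℝ E = N) {T : E →ₗ[ℝ] E}
    (hT : T.IsSymmetric) (x : E) :
    inner ℝ (T x) x = ∑ i, hT.eigenvalues hN i * inner ℝ (hT.eigenvectorBasis hN i) x ^ 2 := by
  rw [← (hT.eigenvectorBasis hN).sum_inner_mul_inner]
  refine Finset.sum_congr rfl fun i _ => ?_
  rw [hT, hT.apply_eigenvectorBasis, inner_smul_right, real_inner_comm]
  simp only [RCLike.ofReal_real_eq_id, id]
  ring

/-- Weyl monotonicity: sorted eigenvalues are monotone in the quadratic form. -/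
lemma eigenvalues_le_of_inner_le {E : Type*} [NormedAddCommGroup E] [InnerProductSpace ℝ E]
    [FiniteDimensional ℝ E] {N : ℕ} (hN : Module.finrank ℝ E = N) {S T : E →ₗ[ℝ] E}
    (hS : S.IsSymmetric) (hT : T.IsSymmetric)
    (h : ∀ x, inner ℝ (S x) x ≤ inner ℝ (T x) x) (k : Fin N) :
    hS.eigenvalues hN k ≤ hT.eigenvalues hN k := by
  -- `N - 1` linear conditions on an `N`-dimensional space have a nonzero common solution.
  let L : E →ₗ[ℝ] ({i : Fin N // i ≠ k} → ℝ) := LinearMap.pi fun i =>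
    if i.1 < k then (innerSL ℝ (hT.eigenvectorBasis hN i) : E →ₗ[ℝ] ℝ)
    else (innerSL ℝ (hS.eigenvectorBasis hN i) : E →ₗ[ℝ] ℝ)
  have hker : LinearMap.ker L ≠ ⊥ := by
    apply LinearMap.ker_ne_bot_of_finrank_lt
    have hk := k.isLt
    simp only [Module.finrank_fintype_fun_eq_card, hN, ne_eq, Fintype.card_subtype_compl,
      Fintype.card_fin, Fintype.card_unique]
    omega
  obtain ⟨x, hx, hx0⟩ := Submodule.exists_mem_ne_zero_of_ne_bot hker
  have hL : ∀ i (hi : i ≠ k), L x ⟨i, hi⟩ = 0 := fun i hi => by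
    rw [LinearMap.mem_ker.mp hx]; rfl
  have hTx : ∀ i, i < k → inner ℝ (hT.eigenvectorBasis hN i) x = 0 := fun i hi => by
    simpa [L, hi] using hL i hi.ne
  have hSx : ∀ i, k < i → inner ℝ (hS.eigenvectorBasis hN i) x = 0 := fun i hi => by
    simpa [L, hi.not_gt] using hL i hi.ne'
  have hpos : 0 < ‖x‖ ^ 2 := by positivity
  have h1 : hS.eigenvalues hN k * ‖x‖ ^ 2 ≤ inner ℝ (S x) x := by
    rw [inner_apply_eq_sum_eigenvalues hN hS, ← (hS.eigenvectorBasis hN).sum_sq_inner_right x,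
      Finset.mul_sum]
    refine Finset.sum_le_sum fun i _ => ?_
    rcases lt_or_ge k i with hi | hi
    · simp [hSx i hi]
    · exact mul_le_mul_of_nonneg_right (hS.eigenvalues_antitone hN hi) (sq_nonneg _)
  have h2 : inner ℝ (T x) x ≤ hT.eigenvalues hN k * ‖x‖ ^ 2 := by
    rw [inner_apply_eq_sum_eigenvalues hN hT, ← (hT.eigenvectorBasis hN).sum_sq_inner_right x,
      Finset.mul_sum]
    refine Finset.sum_le_sum fun i _ => ?_
    rcases lt_or_ge i k with hi | hi
    · simp [hTx i hi]
    · exact mul_le_mul_of_nonneg_right (hT.eigenvalues_antitone hN hi) (sq_nonneg _)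
  exact le_of_mul_le_mul_right (h1.trans ((h x).trans h2)) hpos

lemma eigsDesc_eq_ofFn {V : Type} [Fintype V] [DecidableEq V] {A : Matrix V V ℝ}
    (hA : A.IsHermitian) : eigsDesc A = List.ofFn hA.eigenvalues₀ := by
  rw [eigsDesc, dif_pos hA, ← hA.sort_roots_charpoly_eq_eigenvalues₀,
    hA.roots_charpoly_eq_eigenvalues]
  simp

/-- Both sides take the default value `0` when `k - 1` is out of range, so no bound on `k` is
needed. -/
lemma lambdaK_le_of_posSemidef_sub {V : Type} [Fintype V] [DecidableEq V] {A B : Matrix V V ℝ}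
    (hA : A.IsHermitian) (hB : B.IsHermitian) (h : (B - A).PosSemidef) (k : ℕ) :
    lambdaK A k ≤ lambdaK B k := by
  rw [lambdaK, lambdaK, eigsDesc_eq_ofFn hA, eigsDesc_eq_ofFn hB]
  by_cases hk : k - 1 < Fintype.card V
  · rw [List.getD_eq_getElem _ _ (by simpa using hk), List.getD_eq_getElem _ _ (by simpa using hk),
      List.getElem_ofFn, List.getElem_ofFn]
    refine eigenvalues_le_of_inner_le _ _ _ (fun x => ?_) _
    have hx := h.dotProduct_mulVec_nonneg x.ofLp
    simp only [Matrix.sub_mulVec, dotProduct_sub, star_trivial] at hx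
    simpa [EuclideanSpace.inner_eq_star_dotProduct, Matrix.toLpLin_apply] using hx
  · simp [hk]

theorem stmt_16 (n : ℕ) (hn : 2 ≤ n) (M : Matrix (Fin n) (Fin n) ℝ) (hM : memS M)
    (hmin : ∀ M' : Matrix (Fin n) (Fin n) ℝ, memS M' → lambdaK M (n - 1) ≤ lambdaK M' (n - 1)) :
    memS (Matrix.of (fun i j => if i = j then (0 : ℝ) else M i j)) ∧
    lambdaK (Matrix.of (fun i j => if i = j then (0 : ℝ) else M i j)) (n - 1) =
      lambdaK M (n - 1) ∧
    ∀ M' : Matrix (Fin n) (Fin n) ℝ, memS M' →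
      lambdaK (Matrix.of (fun i j => if i = j then (0 : ℝ) else M i j)) (n - 1) ≤
        lambdaK M' (n - 1) := by
  have hM₀ : memS (Matrix.of (fun i j => if i = j then (0 : ℝ) else M i j)) := by
    refine ⟨Matrix.IsSymm.ext fun i j => ?_, fun i j => ?_⟩
    · simp only [Matrix.of_apply, eq_comm (a := j), hM.1.apply i j]
    · rw [Matrix.of_apply]
      split_ifs
      · simp
      · exact hM.2 i j
  have hdiff : M - Matrix.of (fun i j => if i = j then (0 : ℝ) else M i j)
      = Matrix.diagonal fun i => M i i := by
    ext i j
    by_cases hij : i = j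
    · subst hij; simp
    · simp [hij]
  have hle := lambdaK_le_of_posSemidef_sub
    (A := Matrix.of fun i j => if i = j then (0 : ℝ) else M i j) (B := M)
    (by simpa [Matrix.IsHermitian, Matrix.IsSymm] using hM₀.1)
    (by simpa [Matrix.IsHermitian, Matrix.IsSymm] using hM.1)
    (by rw [hdiff]; exact Matrix.PosSemidef.diagonal fun i => (hM.2 i i).1) (n - 1)
  exact ⟨hM₀, le_antisymm hle (hmin _ hM₀), fun M' hM' => hle.trans (hmin M' hM')⟩
end

section
/- For every n ≥ 2 there exists an n×n symmetric matrix N with all entries in {0, 1} and all diagonal entries equal to 0 (i.e. the adjacency matrix of a simple graph on n vertices) such that λ_{n−1}(N) ≤ λ_{n−1}(M) + 2√n for every M ∈ S_n. -/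
/-!
The minimum of `λ_{n-1}` over the finitely many adjacency matrices is attained, so it suffices to
find, for each `M ∈ 𝒮ₙ`, an adjacency matrix `N` with `λ_{n-1}(N) ≤ λ_{n-1}(M) + 2√n`.

By Courant–Fischer, `λ_{n-1}(A) ≤ μ` exactly when there are orthonormal `u, v` such that
`xᵀ A x ≤ μ ‖x‖²` on the plane they span (`exists_plane_of_lambdaK`, `lambdaK_le_of_plane`). Take
such a plane for `M`. Erasing the (nonnegative) diagonal only lowers the quadratic form. Rounding
each off-diagonal entry `M i j` independently to `1` with probability `M i j` changes the
compression of the matrix to the plane, a symmetric `2 × 2` matrix, by an error of mean zero whose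
expected squared Frobenius norm is at most `3`. Hence some rounding has an error of operator norm
at most `√3 ≤ 2√n`. The expectation argument is carried out one entry at a time in
`exists_rounding`.
-/

open Matrix

/-- An orthonormal eigenbasis `e` with eigenvalues `μ`, in coordinates, together with the positions
`i₀`, `i₁` of the second smallest and the smallest eigenvalue. -/
lemma exists_eigenbasis {n : ℕ} (hn : 2 ≤ n) (A : Matrix (Fin n) (Fin n) ℝ)
    (hA : A.IsHermitian) :
    ∃ (e : Fin n → Fin n → ℝ) (μ : Fin n → ℝ) (i₀ i₁ : Fin n), i₀ ≠ i₁ ∧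
      (∀ j, A *ᵥ e j = μ j • e j) ∧
      (∀ i j, e i ⬝ᵥ e j = if i = j then 1 else 0) ∧
      (∀ x y : Fin n → ℝ, x ⬝ᵥ y = ∑ j, (x ⬝ᵥ e j) * (e j ⬝ᵥ y)) ∧
      μ i₀ = lambdaK A (n - 1) ∧ μ i₁ ≤ lambdaK A (n - 1) ∧
      ∀ j, j ≠ i₁ → lambdaK A (n - 1) ≤ μ j := by
  have hcard : Fintype.card (Fin n) = n := Fintype.card_fin n
  let σ : Fin (Fintype.card (Fin n)) ≃ Fin n := Fintype.equivOfCardEq (Fintype.card_fin _)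
  have hμ : ∀ k, hA.eigenvalues (σ k) = hA.eigenvalues₀ k := fun k => by
    change hA.eigenvalues₀ (σ.symm (σ k)) = _
    rw [Equiv.symm_apply_apply]
  have hsort : eigsDesc A = List.ofFn hA.eigenvalues₀ := by
    rw [← hA.sort_roots_charpoly_eq_eigenvalues₀, hA.roots_charpoly_eq_eigenvalues, eigsDesc,
      dif_pos hA]
    simp [Function.comp_def]
  let k₀ : Fin (Fintype.card (Fin n)) := ⟨n - 2, by omega⟩
  let k₁ : Fin (Fintype.card (Fin n)) := ⟨n - 1, by omega⟩
  have hlam : lambdaK A (n - 1) = hA.eigenvalues₀ k₀ := by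
    have h2 : n - 1 - 1 = n - 2 := by omega
    rw [lambdaK, hsort, h2, List.getD_eq_getElem _ _ (by rw [List.length_ofFn]; omega),
      List.getElem_ofFn]
  have hanti := hA.eigenvalues₀_antitone
  refine ⟨fun j => (hA.eigenvectorBasis j).ofLp, hA.eigenvalues, σ k₀, σ k₁, ?_,
    hA.mulVec_eigenvectorBasis, ?_, ?_, ?_, ?_, ?_⟩
  · intro h
    have h' := congrArg Fin.val (σ.injective h)
    simp only [k₀, k₁] at h'
    omega
  · intro i j
    have h := orthonormal_iff_ite.mp hA.eigenvectorBasis.orthonormal j i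
    rw [EuclideanSpace.inner_eq_star_dotProduct] at h
    simpa [eq_comm] using h
  · intro x y
    have h := hA.eigenvectorBasis.sum_inner_mul_inner (WithLp.toLp 2 x) (WithLp.toLp 2 y)
    simp only [EuclideanSpace.inner_eq_star_dotProduct, star_trivial] at h
    rw [dotProduct_comm x y, ← h]
    exact Finset.sum_congr rfl fun j _ => by
      rw [dotProduct_comm x, dotProduct_comm _ y]
  · rw [hμ, hlam]
  · rw [hμ, hlam]
    exact hanti (Fin.mk_le_mk.mpr (by omega))
  · intro j hj
    obtain ⟨k, rfl⟩ := σ.surjective j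
    rw [hμ, hlam]
    refine hanti (Fin.mk_le_mk.mpr ?_)
    have hk : k ≠ k₁ := fun h => hj (by rw [h])
    have hk' : (k : ℕ) ≠ n - 1 := fun h => hk (Fin.ext h)
    have := k.isLt
    omega

lemma exists_plane_of_lambdaK {n : ℕ} (hn : 2 ≤ n) (A : Matrix (Fin n) (Fin n) ℝ)
    (hA : A.IsHermitian) :
    ∃ u v : Fin n → ℝ, u ⬝ᵥ u = 1 ∧ v ⬝ᵥ v = 1 ∧ u ⬝ᵥ v = 0 ∧
      ∀ a b : ℝ, (a • u + b • v) ⬝ᵥ (A *ᵥ (a • u + b • v)) ≤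
        lambdaK A (n - 1) * (a ^ 2 + b ^ 2) := by
  obtain ⟨e, μ, i₀, i₁, hne, heig, hort, -, h0, h1, -⟩ := exists_eigenbasis hn A hA
  refine ⟨e i₀, e i₁, by simp [hort], by simp [hort], by simp [hort, hne], fun a b => ?_⟩
  have h : (a • e i₀ + b • e i₁) ⬝ᵥ (A *ᵥ (a • e i₀ + b • e i₁)) =
      μ i₀ * a ^ 2 + μ i₁ * b ^ 2 := by
    simp only [mulVec_add, mulVec_smul, heig, add_dotProduct, dotProduct_add, smul_dotProduct,
      dotProduct_smul, hort, hne, hne.symm, smul_eq_mul, if_true, if_false]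
    ring
  rw [h, h0]
  nlinarith [mul_le_mul_of_nonneg_right h1 (sq_nonneg b)]

lemma lambdaK_le_of_plane {n : ℕ} (hn : 2 ≤ n) (A : Matrix (Fin n) (Fin n) ℝ)
    (hA : A.IsHermitian) (u v : Fin n → ℝ) (huu : u ⬝ᵥ u = 1) (hvv : v ⬝ᵥ v = 1)
    (huv : u ⬝ᵥ v = 0) (c : ℝ)
    (hc : ∀ a b : ℝ, (a • u + b • v) ⬝ᵥ (A *ᵥ (a • u + b • v)) ≤ c * (a ^ 2 + b ^ 2)) :
    lambdaK A (n - 1) ≤ c := by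
  obtain ⟨e, μ, i₀, i₁, -, heig, -, hpars, -, -, hmin⟩ := exists_eigenbasis hn A hA
  -- a nonzero vector of the plane orthogonal to the eigenvector of the smallest eigenvalue
  obtain ⟨a, b, hab, horth⟩ : ∃ a b : ℝ, 0 < a ^ 2 + b ^ 2 ∧
      a * (u ⬝ᵥ e i₁) + b * (v ⬝ᵥ e i₁) = 0 := by
    by_cases h : u ⬝ᵥ e i₁ = 0
    · exact ⟨1, 0, by norm_num, by rw [h]; ring⟩
    · exact ⟨v ⬝ᵥ e i₁, -(u ⬝ᵥ e i₁),
        by nlinarith [sq_nonneg (v ⬝ᵥ e i₁), sq_pos_of_ne_zero h], by ring⟩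
  have hx := hc a b
  set x := a • u + b • v with hxdef
  have hxe : x ⬝ᵥ e i₁ = 0 := by
    rw [hxdef, add_dotProduct, smul_dotProduct, smul_dotProduct]
    exact horth
  have hxx : x ⬝ᵥ x = a ^ 2 + b ^ 2 := by
    rw [hxdef]
    simp only [add_dotProduct, dotProduct_add, smul_dotProduct, dotProduct_smul, huu, hvv, huv,
      dotProduct_comm v u, smul_eq_mul]
    ring
  have hsymm : ∀ j, e j ⬝ᵥ (A *ᵥ x) = μ j * (x ⬝ᵥ e j) := fun j => by
    have hT : Aᵀ = A := by simpa [IsHermitian] using hA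
    rw [dotProduct_mulVec, ← mulVec_transpose, hT, heig, smul_dotProduct, dotProduct_comm x,
      smul_eq_mul]
  have hquad : lambdaK A (n - 1) * (x ⬝ᵥ x) ≤ x ⬝ᵥ (A *ᵥ x) := by
    rw [hpars x x, hpars x (A *ᵥ x), Finset.mul_sum]
    refine Finset.sum_le_sum fun j _ => ?_
    rw [hsymm, dotProduct_comm (e j) x]
    by_cases hj : j = i₁
    · rw [hj, hxe]; simp
    · nlinarith [mul_le_mul_of_nonneg_right (hmin j hj) (mul_self_nonneg (x ⬝ᵥ e j))]
  rw [hxx] at hquad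
  exact le_of_mul_le_mul_right (hquad.trans hx) hab

/-- Derandomized rounding: the average over independent `ε i ∈ {0, 1}` of mean `p i` of the
left-hand side is `∑ p i (1 - p i) (f i ² + 2 g i ² + h i ²)`, some choice does no
worse, and `p i (1 - p i) ≤ 1 / 4`. -/
lemma exists_rounding {ι : Type*} [DecidableEq ι] (p f g h : ι → ℝ)
    (hp : ∀ i, p i ∈ Set.Icc (0 : ℝ) 1) (s : Finset ι) :
    ∃ ε : ι → ℝ, (∀ i, ε i = 0 ∨ ε i = 1) ∧
      (∑ i ∈ s, (ε i - p i) * f i) ^ 2 + 2 * (∑ i ∈ s, (ε i - p i) * g i) ^ 2 +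
        (∑ i ∈ s, (ε i - p i) * h i) ^ 2 ≤
      ∑ i ∈ s, (1 / 4) * (f i ^ 2 + 2 * g i ^ 2 + h i ^ 2) := by
  induction s using Finset.induction_on with
  | empty => exact ⟨fun _ => 0, fun _ => Or.inl rfl, by simp⟩
  | insert j s hj ih =>
    obtain ⟨ε, hε, hle⟩ := ih
    have key : ∀ t : ℝ, ∀ w : ι → ℝ,
        ∑ i ∈ insert j s, (Function.update ε j t i - p i) * w i =
          (t - p j) * w j + ∑ i ∈ s, (ε i - p i) * w i := fun t w => by
      rw [Finset.sum_insert hj, Function.update_self]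
      congr 1
      refine Finset.sum_congr rfl fun i hi => ?_
      rw [Function.update_of_ne (ne_of_mem_of_not_mem hi hj)]
    have hupd : ∀ t : ℝ, (t = 0 ∨ t = 1) →
        ∀ i, Function.update ε j t i = 0 ∨ Function.update ε j t i = 1 := fun t ht i => by
      by_cases hij : i = j
      · rw [hij, Function.update_self]; exact ht
      · rw [Function.update_of_ne hij]; exact hε i
    by_contra hcon
    push Not at hcon
    have h0 := hcon _ (hupd 0 (Or.inl rfl))
    have h1 := hcon _ (hupd 1 (Or.inr rfl))
    simp only [key, Finset.sum_insert hj] at h0 h1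
    set F := ∑ i ∈ s, (ε i - p i) * f i
    set G := ∑ i ∈ s, (ε i - p i) * g i
    set H := ∑ i ∈ s, (ε i - p i) * h i
    set B := ∑ i ∈ s, (1 / 4) * (f i ^ 2 + 2 * g i ^ 2 + h i ^ 2)
    obtain ⟨hp0, hp1⟩ := hp j
    have hK : 0 ≤ f j ^ 2 + 2 * g j ^ 2 + h j ^ 2 := by positivity
    have hvar : p j * (1 - p j) * (f j ^ 2 + 2 * g j ^ 2 + h j ^ 2) ≤
        1 / 4 * (f j ^ 2 + 2 * g j ^ 2 + h j ^ 2) :=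
      mul_le_mul_of_nonneg_right (by nlinarith [sq_nonneg (p j - 1 / 2)]) hK
    -- average the two strict inequalities with weights `1 - p j` and `p j`
    have h0' := mul_le_mul_of_nonneg_left h0.le (sub_nonneg.mpr hp1)
    have h1' := mul_le_mul_of_nonneg_left h1.le hp0
    rcases hp0.eq_or_lt with hz | hz
    · rw [← hz] at h0 hvar
      nlinarith
    · have h1'' := mul_lt_mul_of_pos_left h1 hz
      nlinarith

lemma sum_offdiag {n : ℕ} (F : Fin n → Fin n → ℝ) (hF : ∀ i j, F i j = F j i) :
    ∑ i, ∑ j, F i j = (∑ q : Fin n × Fin n, if q.1 < q.2 then 2 * F q.1 q.2 else 0) +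
      ∑ i, F i i := by
  have hsplit : ∀ i j, F i j = (if i < j then F i j else 0) + (if j < i then F i j else 0) +
      (if i = j then F i j else 0) := fun i j => by
    rcases lt_trichotomy i j with h | h | h
    · simp [h, h.not_gt, h.ne]
    · simp [h]
    · simp [h, h.not_gt, h.ne']
  have hswap : ∑ i, ∑ j, (if j < i then F i j else 0) =
      ∑ i, ∑ j, (if i < j then F i j else 0) := by
    rw [Finset.sum_comm]
    exact Finset.sum_congr rfl fun i _ => Finset.sum_congr rfl fun j _ => by rw [hF]
  have hdiag : ∑ i, ∑ j, (if i = j then F i j else 0) = ∑ i, F i i := by simp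
  rw [Fintype.sum_prod_type]
  calc ∑ i, ∑ j, F i j
      = ∑ i, ∑ j, ((if i < j then F i j else 0) + (if j < i then F i j else 0) +
          (if i = j then F i j else 0)) :=
        Finset.sum_congr rfl fun i _ => Finset.sum_congr rfl fun j _ => hsplit i j
    _ = _ := by
        simp only [Finset.sum_add_distrib]
        rw [hswap, hdiag, ← Finset.sum_add_distrib]
        congr 1
        refine Finset.sum_congr rfl fun i _ => ?_
        rw [← Finset.sum_add_distrib]
        refine Finset.sum_congr rfl fun j _ => ?_
        split_ifs <;> ring

/-- A graph whose `λ_{n-1}` is close to that of a given `M ∈ 𝒮ₙ`. -/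
lemma exists_graph_near {n : ℕ} (hn : 2 ≤ n) (M : Matrix (Fin n) (Fin n) ℝ) (hM : memS M) :
    ∃ N : Matrix (Fin n) (Fin n) ℝ, N.IsSymm ∧ (∀ i j, N i j = 0 ∨ N i j = 1) ∧
      (∀ i, N i i = 0) ∧ lambdaK N (n - 1) ≤ lambdaK M (n - 1) + 2 * Real.sqrt n := by
  obtain ⟨hMs, hM01⟩ := hM
  have hherm : ∀ A : Matrix (Fin n) (Fin n) ℝ, A.IsSymm → A.IsHermitian := fun A hA => by
    rw [IsHermitian, conjTranspose_eq_transpose_of_trivial]; exact hA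
  obtain ⟨u, v, huu, hvv, huv, hplane⟩ := exists_plane_of_lambdaK hn M (hherm M hMs)
  let f : Fin n × Fin n → ℝ := fun q => if q.1 < q.2 then 2 * (u q.1 * u q.2) else 0
  let g : Fin n × Fin n → ℝ := fun q =>
    if q.1 < q.2 then u q.1 * v q.2 + u q.2 * v q.1 else 0
  let h : Fin n × Fin n → ℝ := fun q => if q.1 < q.2 then 2 * (v q.1 * v q.2) else 0
  obtain ⟨ε, hε, hround⟩ := exists_rounding (fun q : Fin n × Fin n => M q.1 q.2) f g h
    (fun q => hM01 q.1 q.2) Finset.univ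
  set X := ∑ q : Fin n × Fin n, (ε q - M q.1 q.2) * f q
  set Y := ∑ q : Fin n × Fin n, (ε q - M q.1 q.2) * g q
  set Z := ∑ q : Fin n × Fin n, (ε q - M q.1 q.2) * h q
  -- dropping the restriction `q.1 < q.2` still leaves a total of at most `12 / 4`
  have hbound : ∑ q : Fin n × Fin n, (1 / 4) * (f q ^ 2 + 2 * g q ^ 2 + h q ^ 2) ≤ 3 := by
    have hle : ∀ q : Fin n × Fin n, (1 / 4) * (f q ^ 2 + 2 * g q ^ 2 + h q ^ 2) ≤
        (u q.1 * u q.1) * (u q.2 * u q.2) + (1 / 2) * ((u q.1 * u q.1) * (v q.2 * v q.2)) +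
        (u q.1 * v q.1) * (u q.2 * v q.2) + (1 / 2) * ((v q.1 * v q.1) * (u q.2 * u q.2)) +
        (v q.1 * v q.1) * (v q.2 * v q.2) := fun q => by
      simp only [f, g, h]
      split_ifs
      · apply le_of_eq; ring
      · nlinarith [sq_nonneg (u q.1 * u q.2), sq_nonneg (v q.1 * v q.2),
          sq_nonneg (u q.1 * v q.2 + v q.1 * u q.2)]
    refine (Finset.sum_le_sum fun q _ => hle q).trans (le_of_eq ?_)
    have hprod : ∀ x y z w : Fin n → ℝ, ∑ q : Fin n × Fin n, (x q.1 * y q.1) * (z q.2 * w q.2) =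
        (x ⬝ᵥ y) * (z ⬝ᵥ w) := fun x y z w => by
      rw [Fintype.sum_prod_type]
      simp only [dotProduct, Finset.sum_mul_sum]
    simp only [Finset.sum_add_distrib, ← Finset.mul_sum, hprod, huu, hvv, huv]
    norm_num
  let N : Matrix (Fin n) (Fin n) ℝ := Matrix.of fun i j =>
    if i < j then ε (i, j) else if j < i then ε (j, i) else 0
  have hNs : ∀ i j, N i j = N j i := fun i j => by
    simp only [N, Matrix.of_apply]
    rcases lt_trichotomy i j with h | h | h
    · simp [h, h.not_gt]
    · simp [h]
    · simp [h, h.not_gt]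
  have hNd : ∀ i, N i i = 0 := fun i => by simp [N]
  have hNsymm : N.IsSymm := Matrix.IsSymm.ext fun i j => hNs j i
  refine ⟨N, hNsymm, fun i j => ?_, hNd, ?_⟩
  · simp only [N, Matrix.of_apply]
    split_ifs
    · exact hε _
    · exact hε _
    · exact Or.inl rfl
  refine lambdaK_le_of_plane hn N (hherm N hNsymm) u v huu hvv huv _ fun a b => ?_
  have hMq := hplane a b
  set x := a • u + b • v with hx
  have hMs' : ∀ i j, M i j = M j i := fun i j => hMs.apply j i
  have hdiff : x ⬝ᵥ (N *ᵥ x) - x ⬝ᵥ (M *ᵥ x) =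
      (∑ q : Fin n × Fin n, if q.1 < q.2 then
        2 * (x q.1 * ((N q.1 q.2 - M q.1 q.2) * x q.2)) else 0) +
      ∑ i, x i * ((N i i - M i i) * x i) := by
    rw [← sum_offdiag (fun i j => x i * ((N i j - M i j) * x j))
      (fun i j => by rw [hNs i j, hMs' i j]; ring), ← dotProduct_sub, ← sub_mulVec]
    simp only [dotProduct, mulVec, Finset.mul_sum, Matrix.sub_apply]
  have hdiag : ∑ i, x i * ((N i i - M i i) * x i) ≤ 0 := by
    refine Finset.sum_nonpos fun i _ => ?_
    rw [hNd]
    nlinarith [mul_nonneg (hM01 i i).1 (mul_self_nonneg (x i))]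
  have hoff : (∑ q : Fin n × Fin n, if q.1 < q.2 then
        2 * (x q.1 * ((N q.1 q.2 - M q.1 q.2) * x q.2)) else 0) =
      a ^ 2 * X + 2 * (a * b) * Y + b ^ 2 * Z := by
    simp only [X, Y, Z, Finset.mul_sum, ← Finset.sum_add_distrib]
    refine Finset.sum_congr rfl fun q _ => ?_
    simp only [f, g, h]
    split_ifs with hq
    · have hNq : N q.1 q.2 = ε q := by simp [N, hq]
      rw [hNq, hx]
      simp only [Pi.add_apply, Pi.smul_apply, smul_eq_mul]
      ring
    · ring
  have hsq : X ^ 2 + 2 * Y ^ 2 + Z ^ 2 ≤ 2 ^ 2 := by linarith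
  -- Cauchy–Schwarz for the Frobenius inner product of `2 × 2` matrices
  have hform : a ^ 2 * X + 2 * (a * b) * Y + b ^ 2 * Z ≤ 2 * (a ^ 2 + b ^ 2) := by
    have hCS : (a ^ 2 * X + 2 * (a * b) * Y + b ^ 2 * Z) ^ 2 ≤
        (a ^ 2 + b ^ 2) ^ 2 * (X ^ 2 + 2 * Y ^ 2 + Z ^ 2) := by
      nlinarith [sq_nonneg (a ^ 2 * Y - a * b * X), sq_nonneg (a ^ 2 * Z - b ^ 2 * X),
        sq_nonneg (b ^ 2 * Y - a * b * Z)]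
    refine abs_le_of_sq_le_sq' ?_ (by positivity) |>.2
    nlinarith [mul_le_mul_of_nonneg_left hsq (sq_nonneg (a ^ 2 + b ^ 2))]
  have hroot : 1 ≤ Real.sqrt n := by
    rw [Real.one_le_sqrt]
    exact_mod_cast (by omega : 1 ≤ n)
  have hab : 0 ≤ a ^ 2 + b ^ 2 := by positivity
  nlinarith [mul_le_mul_of_nonneg_right hroot hab]

theorem stmt_18 (n : ℕ) (hn : 2 ≤ n) :
    ∃ N : Matrix (Fin n) (Fin n) ℝ, N.IsSymm ∧
      (∀ i j, N i j = 0 ∨ N i j = 1) ∧ (∀ i, N i i = 0) ∧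
      ∀ M : Matrix (Fin n) (Fin n) ℝ, memS M →
        lambdaK N (n - 1) ≤ lambdaK M (n - 1) + 2 * Real.sqrt n := by
  let G : Set (Matrix (Fin n) (Fin n) ℝ) :=
    {N | N.IsSymm ∧ (∀ i j, N i j = 0 ∨ N i j = 1) ∧ ∀ i, N i i = 0}
  have hfin : G.Finite := by
    have h01 : ({0, 1} : Set ℝ).Finite := Set.toFinite _
    refine (Set.Finite.pi' fun _ : Fin n => Set.Finite.pi' fun _ : Fin n => h01).subset ?_
    intro N hN i j
    exact hN.2.1 i j
  have hne : G.Nonempty := ⟨0, by simp [G, Matrix.IsSymm]⟩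
  obtain ⟨N, hN, hmin⟩ := hfin.exists_minimalFor (fun N => lambdaK N (n - 1)) G hne
  refine ⟨N, hN.1, hN.2.1, hN.2.2, fun M hM => ?_⟩
  obtain ⟨N', h1, h2, h3, h4⟩ := exists_graph_near hn M hM
  have hle : lambdaK N (n - 1) ≤ lambdaK N' (n - 1) := by
    by_contra hlt
    exact hlt (hmin ⟨h1, h2, h3⟩ (not_le.mp hlt).le)
  exact hle.trans h4
end
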